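/- arXiv:2311.17281 — 2 statements merged into one kernel-verified Lean document; each statement's English description precedes it below -/
import Mathlib

section
/- There exist universal constants α₀ ≥ 1, c > 0, c' > 0 and n₀ such that for all n ≥ n₀, 1 ≤ r ≤ n/2, α ≥ α₀ and k ≥ nr the following holds. Let G be an n×n standard Gaussian random matrix and u₁,…,u_r, v₁,…,v_r ∈ ℝⁿ standard Gaussian random vectors, all mutually independent, and consider the input matrix M = G + (α/√n)·Σ_{i=1}^r uᵢvᵢᵀ. If a randomized t-round adaptive algorithm making k exact linear measurements of M in each round outputs a matrix Â with Pr[‖Â − Σ_{i=1}^r uᵢvᵢᵀ‖_F² ≤ c·n²·r] ≥ 9/10 (over the input randomness and the seed), then t ≥ c'·log(n²/k)/(log α + log log n). -/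
/-!
The energy `E` that an adaptive algorithm captures of a signal `a` is the sum of `‖q a‖²` over the
query matrices `q` of its rounds. The likelihood ratio of the transcript with signal to the one
without has a second moment governed by `E`, so a Donsker–Varadhan type inequality says that the
transcript is worth at most `E` on average: a statistic of the transcript and the signal whose
exponential moment is at most `exp B` when the two are independent has mean at most that of `E + B`
under their true joint law.

Applied to the energy of the next round, this shows that the energy captured by `t` rounds grows at
most like `(1 + 128 α²)ᵗ`. Applied to the squared inner product of the plant with the direction of
the output, it shows that an accurate estimate requires energy of order `n r`. The exponential
moments needed here are infinite for the plant itself, whose factors have unbounded norm; they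
become finite after conditioning on an event of probability at least `3 / 5` on which one factor
has a bounded operator norm. The same event makes the plant long, and an algorithm succeeding with
probability `9 / 10` still succeeds with probability at least `1 / 2` conditionally on it.
-/

open MeasureTheory ProbabilityTheory Matrix
open scoped ENNReal Classical

noncomputable section

/-- Squared Euclidean norm of a finitely-indexed real vector. -/
def sqNorm {ι : Type*} [Fintype ι] (x : ι → ℝ) : ℝ := ∑ i, x i ^ 2

/-- Squared Frobenius norm of a real matrix. -/
def frobSq {m n : Type*} [Fintype m] [Fintype n] (A : Matrix m n ℝ) : ℝ :=
  ∑ i, ∑ j, A i j ^ 2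

/-- Spectral (ℓ₂ operator) norm of a real matrix. -/
def specNorm {m n : Type*} [Fintype m] [Fintype n] (A : Matrix m n ℝ) : ℝ :=
  sSup ((fun x : n → ℝ => Real.sqrt (sqNorm (A.mulVec x))) '' {x | sqNorm x ≤ 1})

/-- `i`-th largest singular value (1-based), characterized via
`σ_i(A) = min {‖A − X‖ : rank X ≤ i − 1}`. -/
def singVal {m n : Type*} [Fintype m] [Fintype n] (A : Matrix m n ℝ) (i : ℕ) : ℝ :=
  sInf {c | ∃ X : Matrix m n ℝ, X.rank ≤ i - 1 ∧ c = specNorm (A - X)}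

/-- Flattening of an `n × n` matrix into a vector in `ℝ^{n²}`. -/
def vec (n : ℕ) (A : Matrix (Fin n) (Fin n) ℝ) : Fin (n * n) → ℝ :=
  fun i => A (finProdFinEquiv.symm i).1 (finProdFinEquiv.symm i).2

/-- `u ⊗ v = vec (u vᵀ) ∈ ℝ^{n²}`. -/
def tensor {n : ℕ} (u v : Fin n → ℝ) : Fin (n * n) → ℝ :=
  vec n (Matrix.of fun i j => u i * v j)

/-- Standard Gaussian measure on `ι → ℝ`. -/
def stdGaussian (ι : Type*) [Fintype ι] : Measure (ι → ℝ) :=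
  Measure.pi fun _ => gaussianReal 0 1

/-- Standard Gaussian measure on `n × n` matrices (as `Fin n → Fin n → ℝ`). -/
def stdGaussianMat (n : ℕ) : Measure (Fin n → Fin n → ℝ) :=
  Measure.pi fun _ => stdGaussian (Fin n)

/-- Query maps of a deterministic `t`-round adaptive algorithm making `k` linear
measurements per round on inputs in `ℝ^N`. -/
def QueryMaps (N k t : ℕ) : Type :=
  (j : Fin t) → (Fin (j : ℕ) → (Fin k → ℝ)) → Matrix (Fin k) (Fin N) ℝ

namespace QueryMaps

variable {N k t : ℕ}

/-- Restriction of a round-`j` history to the first `i` rounds. -/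
def prefixHist {j : Fin t} (h : Fin (j : ℕ) → Fin k → ℝ) {i : Fin t}
    (hij : (i : ℕ) < (j : ℕ)) : Fin (i : ℕ) → Fin k → ℝ :=
  fun l => h ⟨l.1, l.isLt.trans hij⟩

/-- Validity of query maps: measurability, orthonormal rows within each round, and
orthogonality across rounds along consistent histories. -/
def Valid (Q : QueryMaps N k t) : Prop :=
  (∀ (j : Fin t) (i : Fin k) (l : Fin N), Measurable fun h => Q j h i l) ∧
  (∀ (j : Fin t) (h : Fin (j : ℕ) → Fin k → ℝ), Q j h * (Q j h)ᵀ = 1) ∧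
  (∀ (j i : Fin t) (hij : (i : ℕ) < (j : ℕ)) (h : Fin (j : ℕ) → Fin k → ℝ),
      Q j h * (Q i (prefixHist h hij))ᵀ = 0)

/-- Responses of the algorithm under exact linear measurements of `a`. -/
def resp (Q : QueryMaps N k t) (a : Fin N → ℝ) (j : Fin t) : Fin k → ℝ :=
  (Q j fun i => resp Q a ⟨i.1, i.isLt.trans j.isLt⟩).mulVec a
termination_by (j : ℕ)
decreasing_by exact i.isLt

/-- Responses of the algorithm under noisy linear measurements of `a`, with fresh
per-round noise `g`. -/
def nresp (Q : QueryMaps N k t) (a : Fin N → ℝ) (g : Fin t → Fin k → ℝ) (j : Fin t) :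
    Fin k → ℝ :=
  ((Q j fun i => nresp Q a g ⟨i.1, i.isLt.trans j.isLt⟩).mulVec a) + g j
termination_by (j : ℕ)
decreasing_by exact i.isLt

/-- The `tk × N` matrix stacking all the query matrices realized along the run of the
algorithm on input `a` (exact measurements). -/
def runMat (Q : QueryMaps N k t) (a : Fin N → ℝ) : Matrix (Fin t × Fin k) (Fin N) ℝ :=
  Matrix.of fun p l =>
    Q p.1 (fun i => resp Q a ⟨i.1, i.isLt.trans p.1.isLt⟩) p.2 l

end QueryMaps

/-- Kullback–Leibler divergence, valued in `[0, ∞]`, defined with the natural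
logarithm. -/
def klDiv {Ω : Type*} [MeasurableSpace Ω] (P Q : Measure Ω) : ℝ≥0∞ :=
  if P ≪ Q ∧ Integrable (fun x => Real.log ((P.rnDeriv Q x).toReal)) P then
    ENNReal.ofReal (∫ x, Real.log ((P.rnDeriv Q x).toReal) ∂P)
  else ⊤


/-- The rank-`r` plant `Σ_{i=1}^r uᵢ vᵢᵀ` built from the rows of `U` and `V`. -/
def plant {n r : ℕ} (U V : Fin r → Fin n → ℝ) : Matrix (Fin n) (Fin n) ℝ :=
  Matrix.of fun i j => ∑ l, U l i * V l j

/-- Schatten-`p` norm (real `p`), via the singular values. -/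
def schattenNorm {n : ℕ} (p : ℝ) (A : Matrix (Fin n) (Fin n) ℝ) : ℝ :=
  (∑ i ∈ Finset.range n, singVal A (i + 1) ^ p) ^ (1 / p)

/-- Ky-Fan `p` norm: sum of the `p` largest singular values. -/
def kyFanNorm {n : ℕ} (p : ℕ) (A : Matrix (Fin n) (Fin n) ℝ) : ℝ :=
  ∑ i ∈ Finset.range p, singVal A (i + 1)

local notation "𝒩" => (_root_.stdGaussian)

/-! ### Squared norms -/

section SquaredNorms

variable {ι κ X : Type*} [Fintype ι] [MeasurableSpace X]

lemma sqNorm_nonneg (x : ι → ℝ) : 0 ≤ sqNorm x :=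
  Finset.sum_nonneg fun _ _ => sq_nonneg _

lemma sqNorm_eq_dotProduct (x : ι → ℝ) : sqNorm x = x ⬝ᵥ x := by
  simp [sqNorm, dotProduct, sq]

lemma sqNorm_smul (c : ℝ) (x : ι → ℝ) : sqNorm (c • x) = c ^ 2 * sqNorm x := by
  simp [sqNorm, mul_pow, Finset.mul_sum]

lemma sqNorm_single [DecidableEq ι] (i : ι) : sqNorm (Pi.single i (1 : ℝ)) = 1 := by
  simp [sqNorm_eq_dotProduct]

lemma sq_dotProduct_le (x y : ι → ℝ) : (x ⬝ᵥ y) ^ 2 ≤ sqNorm x * sqNorm y :=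
  Finset.sum_mul_sq_le_sq_mul_sq _ _ _

@[fun_prop]
lemma measurable_sqNorm : Measurable (sqNorm : (ι → ℝ) → ℝ) := by
  unfold sqNorm
  fun_prop

@[fun_prop]
lemma measurable_dotProduct {x y : X → ι → ℝ} (hx : Measurable x) (hy : Measurable y) :
    Measurable fun p => x p ⬝ᵥ y p := by
  unfold dotProduct
  fun_prop

lemma measurable_mulVec {A : X → Matrix κ ι ℝ} (hA : ∀ k i, Measurable fun p => A p k i)
    {x : X → ι → ℝ} (hx : Measurable x) : Measurable fun p => A p *ᵥ x p :=
  measurable_pi_lambda _ fun k => measurable_dotProduct (measurable_pi_lambda _ (hA k)) hx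

@[fun_prop]
lemma measurable_const_mulVec (A : Matrix κ ι ℝ) {x : X → ι → ℝ} (hx : Measurable x) :
    Measurable fun p => A *ᵥ x p :=
  measurable_mulVec (A := fun _ => A) (fun _ _ => measurable_const) hx

variable [Fintype κ]

lemma frobSq_eq_trace (A : Matrix κ ι ℝ) : frobSq A = (Aᵀ * A).trace := by
  simp only [frobSq, trace, diag, mul_apply, transpose_apply, ← sq]
  exact Finset.sum_comm

lemma sqNorm_mulVec (A : Matrix κ ι ℝ) (x : ι → ℝ) : sqNorm (A *ᵥ x) = x ⬝ᵥ (Aᵀ * A) *ᵥ x := by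
  rw [sqNorm_eq_dotProduct, ← mulVec_mulVec, mulVec_transpose, dotProduct_comm x,
    ← dotProduct_mulVec]

lemma sqNorm_mulVec_le (A : Matrix κ ι ℝ) (x : ι → ℝ) :
    sqNorm (A *ᵥ x) ≤ frobSq A * sqNorm x := by
  rw [frobSq, Finset.sum_mul]
  exact Finset.sum_le_sum fun k _ => sq_dotProduct_le (A k) x

lemma sqNorm_mulVec_of_transpose_mul_self [DecidableEq ι] {A : Matrix κ ι ℝ} (hA : Aᵀ * A = 1)
    (x : ι → ℝ) : sqNorm (A *ᵥ x) = sqNorm x := by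
  rw [sqNorm_mulVec, hA, one_mulVec, sqNorm_eq_dotProduct]

lemma sqNorm_mulVec_le_of_mul_transpose_self [DecidableEq κ] {A : Matrix κ ι ℝ} (hA : A * Aᵀ = 1)
    (x : ι → ℝ) : sqNorm (A *ᵥ x) ≤ sqNorm x := by
  have hcross : x ⬝ᵥ Aᵀ *ᵥ A *ᵥ x = sqNorm (A *ᵥ x) := by rw [mulVec_mulVec, sqNorm_mulVec]
  have hproj : sqNorm (Aᵀ *ᵥ A *ᵥ x) = sqNorm (A *ᵥ x) :=
    sqNorm_mulVec_of_transpose_mul_self (by rwa [transpose_transpose]) _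
  have hresidual := sqNorm_nonneg (x - Aᵀ *ᵥ A *ᵥ x)
  simp only [sqNorm_eq_dotProduct, sub_dotProduct, dotProduct_sub, dotProduct_comm _ x] at *
  linarith

lemma frobSq_of_mul_transpose_self [DecidableEq κ] {A : Matrix κ ι ℝ} (hA : A * Aᵀ = 1) :
    frobSq A = Fintype.card κ := by
  rw [frobSq_eq_trace, trace_mul_comm, hA, trace_one]

end SquaredNorms

/-! ### Products of probability measures -/

section ProductMeasures

variable {ι : Type*} [Fintype ι] {X : ι → Type*} [∀ i, MeasurableSpace (X i)]
  (μ : ∀ i, Measure (X i)) [∀ i, IsProbabilityMeasure (μ i)]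

lemma lintegral_pi_prod {f : ∀ i, X i → ℝ≥0∞} (hf : ∀ i, Measurable (f i)) :
    ∫⁻ x, ∏ i, f i (x i) ∂Measure.pi μ = ∏ i, ∫⁻ y, f i y ∂μ i := by
  have hind : iIndepFun (fun i (x : ∀ i, X i) => f i (x i)) (Measure.pi μ) :=
    iIndepFun_pi fun i => (hf i).aemeasurable
  rw [lintegral_prod_eq_prod_lintegral_of_indepFun Finset.univ _ hind
    fun i => (hf i).comp (measurable_pi_apply i)]
  exact Finset.prod_congr rfl fun i _ => (measurePreserving_eval μ i).lintegral_comp (hf i)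

lemma pi_eq_withDensity_prod {ν : ∀ i, Measure (X i)} [∀ i, SigmaFinite (ν i)]
    {f : ∀ i, X i → ℝ≥0∞} (hf : ∀ i, Measurable (f i)) (hν : ∀ i, ν i = (μ i).withDensity (f i)) :
    Measure.pi ν = (Measure.pi μ).withDensity fun x => ∏ i, f i (x i) := by
  refine Measure.pi_eq fun s hs => ?_
  have hind : ∀ x : ∀ i, X i, (Set.univ.pi s).indicator (fun x => ∏ i, f i (x i)) x
      = ∏ i, (s i).indicator (f i) (x i) := by
    intro x
    by_cases hx : ∀ i, x i ∈ s i
    · simp [Set.mem_pi, hx]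
    · obtain ⟨i, hi⟩ := not_forall.1 hx
      rw [Set.indicator_of_notMem (by simpa using ⟨i, hi⟩), Finset.prod_eq_zero (Finset.mem_univ i)
        (Set.indicator_of_notMem hi _)]
  rw [withDensity_apply _ (.univ_pi hs), ← lintegral_indicator (.univ_pi hs), lintegral_congr hind,
    lintegral_pi_prod μ fun i => (hf i).indicator (hs i)]
  refine Finset.prod_congr rfl fun i _ => ?_
  rw [hν i, withDensity_apply _ (hs i), lintegral_indicator (hs i)]

end ProductMeasures

lemma pi_fin_succ_eq_map_cons {t : ℕ} {X : Type*} [MeasurableSpace X] (μ : Measure X)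
    [SigmaFinite μ] :
    Measure.pi (fun _ : Fin (t + 1) => μ)
      = (μ.prod (Measure.pi fun _ : Fin t => μ)).map
          fun p => Fin.cons (α := fun _ => X) p.1 p.2 := by
  rw [← ((measurePreserving_piFinSuccAbove (fun _ : Fin (t + 1) => μ) 0).symm).map_eq]
  congr 1
  exact funext fun p => funext <| Fin.cases rfl fun _ => rfl

lemma measurable_fin_cons {t : ℕ} {X Y : Type*} [MeasurableSpace X] [MeasurableSpace Y]
    {f : Y → X} {g : Y → Fin t → X} (hf : Measurable f) (hg : Measurable g) :
    Measurable fun y => (Fin.cons (α := fun _ => X) (f y) (g y) : Fin (t + 1) → X) :=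
  measurable_pi_lambda _ <| Fin.cases hf fun i => (measurable_pi_apply i).comp hg

/-! ### Standard Gaussian vectors -/

section StdGaussian

variable {ι κ : Type*} [Fintype ι] [Fintype κ]

instance : IsProbabilityMeasure (𝒩 ι) :=
  inferInstanceAs (IsProbabilityMeasure (Measure.pi _))

lemma charFunDual_pi_gaussianReal [DecidableEq ι] (L : StrongDual ℝ (ι → ℝ)) :
    charFunDual (𝒩 ι) L = Complex.exp (-(sqNorm fun i => L (Pi.single i 1) : ℝ) / 2) := by
  have h1 : ∀ i, charFunDual (gaussianReal 0 1) (L.comp (.single ℝ (fun _ : ι => ℝ) i))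
      = Complex.exp (-((L (Pi.single i 1)) ^ 2 : ℝ) / 2) := fun i => by
    rw [IsGaussian.charFunDual_eq, integral_complex_ofReal,
      integral_continuousLinearMap_gaussianReal, variance_continuousLinearMap_gaussianReal]
    simp [neg_div, max_eq_left (sq_nonneg _)]
  rw [_root_.stdGaussian, charFunDual_pi, Finset.prod_congr rfl fun i _ => h1 i, ← Complex.exp_sum,
    ← Finset.sum_div, Finset.sum_neg_distrib, sqNorm, Complex.ofReal_sum]

lemma map_mulVec_stdGaussian [DecidableEq κ] {A : Matrix κ ι ℝ} (hA : A * Aᵀ = 1) :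
    (𝒩 ι).map (A *ᵥ ·) = 𝒩 κ := by
  classical
  let T : (ι → ℝ) →L[ℝ] (κ → ℝ) := LinearMap.toContinuousLinearMap A.mulVecLin
  have : IsProbabilityMeasure ((𝒩 ι).map T) :=
    Measure.isProbabilityMeasure_map T.continuous.measurable.aemeasurable
  refine Measure.ext_of_charFunDual (μ := (𝒩 ι).map T) (funext fun L => ?_)
  rw [charFunDual_map, charFunDual_pi_gaussianReal, charFunDual_pi_gaussianReal]
  have hLT : (fun i => L.comp T (Pi.single i 1)) = Aᵀ *ᵥ fun j => L (Pi.single j 1) := by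
    funext i
    have hTi : T (Pi.single i 1) = fun j => A j i := by ext j; simp [T]
    rw [ContinuousLinearMap.comp_apply, hTi, pi_eq_sum_univ' (fun j => A j i), map_sum]
    simp [mulVec, dotProduct]
  rw [hLT, sqNorm_mulVec_of_transpose_mul_self (by rwa [transpose_transpose])]

lemma gaussianReal_eq_withDensity (b : ℝ) :
    gaussianReal b 1 = (gaussianReal 0 1).withDensity
      fun x => ENNReal.ofReal (Real.exp (b * x - b ^ 2 / 2)) := by
  rw [gaussianReal_of_var_ne_zero _ one_ne_zero, gaussianReal_of_var_ne_zero _ one_ne_zero,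
    ← withDensity_mul _ (measurable_gaussianPDF _ _) (by fun_prop)]
  congr 1
  funext x
  simp only [gaussianPDF, Pi.mul_apply, gaussianPDFReal]
  rw [← ENNReal.ofReal_mul (by positivity), mul_assoc (√_)⁻¹, ← Real.exp_add, NNReal.coe_one]
  ring_nf

theorem map_add_stdGaussian (b : ι → ℝ) :
    (𝒩 ι).map (· + b) = (𝒩 ι).withDensity
      fun x => ENNReal.ofReal (Real.exp (b ⬝ᵥ x - sqNorm b / 2)) := by
  have hshift : (𝒩 ι).map (· + b) = Measure.pi fun i => gaussianReal (b i) 1 := by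
    have := Measure.pi_map_pi (μ := fun _ : ι => gaussianReal 0 1) (f := fun i y => y + b i)
      fun i => by fun_prop
    simp only [gaussianReal_map_add_const, zero_add] at this
    exact this
  rw [hshift, pi_eq_withDensity_prod (fun _ => gaussianReal 0 1) (fun i => by fun_prop)
    fun i => gaussianReal_eq_withDensity (b i)]
  refine congrArg _ (funext fun x => ?_)
  rw [← ENNReal.ofReal_prod_of_nonneg fun _ _ => (Real.exp_pos _).le, ← Real.exp_sum,
    Finset.sum_sub_distrib, ← Finset.sum_div]
  rfl

lemma lintegral_stdGaussian_add (b : ι → ℝ) {f : (ι → ℝ) → ℝ≥0∞} (hf : Measurable f) :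
    ∫⁻ x, f (x + b) ∂𝒩 ι
      = ∫⁻ x, ENNReal.ofReal (Real.exp (b ⬝ᵥ x - sqNorm b / 2)) * f x ∂𝒩 ι := by
  rw [← lintegral_map (μ := 𝒩 ι) (g := (· + b)) hf (by fun_prop), map_add_stdGaussian,
    lintegral_withDensity_eq_lintegral_mul _ (by fun_prop) hf]
  rfl

lemma stdGaussian_sum :
    𝒩 (κ ⊕ ι) = ((𝒩 κ).prod (𝒩 ι)).map fun p => Sum.elim p.1 p.2 := by
  have hmap := (measurePreserving_sumPiEquivProdPi_symm fun _ : κ ⊕ ι => gaussianReal 0 1).map_eq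
  refine hmap.symm.trans (congrArg (fun f => Measure.map f _) ?_)
  funext p x
  cases x <;> rfl

/-- If the rows of `A` are orthonormal, then `Aᵀ r + (1 - Aᵀ A) g` is a standard Gaussian vector
for independent standard Gaussian vectors `r` and `g`, because `[Aᵀ | 1 - Aᵀ A]` has orthonormal
rows. -/
lemma lintegral_stdGaussian_split [DecidableEq ι] [DecidableEq κ] {A : Matrix κ ι ℝ}
    (hA : A * Aᵀ = 1) {f : (ι → ℝ) → ℝ≥0∞} (hf : Measurable f) :
    ∫⁻ x, f x ∂𝒩 ι = ∫⁻ r, ∫⁻ g, f (Aᵀ *ᵥ r + (1 - Aᵀ * A) *ᵥ g) ∂𝒩 ι ∂𝒩 κ := by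
  have hproj : (1 - Aᵀ * A) * (1 - Aᵀ * A) = 1 - Aᵀ * A := by
    have : Aᵀ * A * (Aᵀ * A) = Aᵀ * A := by
      rw [Matrix.mul_assoc, ← Matrix.mul_assoc A, hA, Matrix.one_mul]
    rw [Matrix.sub_mul, Matrix.mul_sub, Matrix.mul_sub, this]
    simp
  have hrows : fromCols Aᵀ (1 - Aᵀ * A) * (fromCols Aᵀ (1 - Aᵀ * A))ᵀ = 1 := by
    simp [transpose_fromCols, fromCols_mul_fromRows, hproj]
  have hmeas : Measurable fun p : (κ → ℝ) × (ι → ℝ) => Sum.elim p.1 p.2 :=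
    measurable_pi_lambda _ <| by rintro (k | i) <;> dsimp only [Sum.elim] <;> fun_prop
  conv_lhs => rw [← map_mulVec_stdGaussian hrows]
  rw [lintegral_map hf (by fun_prop), stdGaussian_sum,
    lintegral_map (by fun_prop) hmeas, lintegral_prod _ (by fun_prop)]
  simp_rw [fromCols_mulVec_sumElim]

/-- The law of a random matrix with independent standard Gaussian entries, as a family of rows. -/
def gaussianMatrix (κ ι : Type*) [Fintype κ] [Fintype ι] : Measure (κ → ι → ℝ) :=
  Measure.pi fun _ => 𝒩 ι

instance : IsProbabilityMeasure (gaussianMatrix κ ι) :=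
  inferInstanceAs (IsProbabilityMeasure (Measure.pi _))

lemma map_uncurry_gaussianMatrix :
    (gaussianMatrix κ ι).map (fun U (p : κ × ι) => U p.1 p.2) = 𝒩 (κ × ι) := by
  refine (Measure.pi_eq fun s hs => ?_).symm
  have hpre : (fun (U : κ → ι → ℝ) (p : κ × ι) => U p.1 p.2) ⁻¹' Set.univ.pi s
      = Set.univ.pi fun k => Set.univ.pi fun i => s (k, i) := by
    ext U
    simp
  rw [Measure.map_apply (by fun_prop) (.univ_pi hs), hpre, gaussianMatrix, Measure.pi_pi,
    Fintype.prod_prod_type]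
  exact Finset.prod_congr rfl fun k _ => Measure.pi_pi _ _

lemma lintegral_gaussianMatrix_succ {t : ℕ} {f : (Fin (t + 1) → ι → ℝ) → ℝ≥0∞}
    (hf : Measurable f) :
    ∫⁻ h, f h ∂gaussianMatrix (Fin (t + 1)) ι
      = ∫⁻ r, ∫⁻ h, f (Fin.cons (α := fun _ => ι → ℝ) r h) ∂gaussianMatrix (Fin t) ι ∂𝒩 ι := by
  have hcons : Measurable fun p : (ι → ℝ) × (Fin t → ι → ℝ) =>
      (Fin.cons (α := fun _ => ι → ℝ) p.1 p.2 : Fin (t + 1) → ι → ℝ) :=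
    measurable_fin_cons measurable_fst measurable_snd
  rw [gaussianMatrix, pi_fin_succ_eq_map_cons, lintegral_map hf hcons, lintegral_prod]
  · rfl
  · exact (hf.comp hcons).aemeasurable

end StdGaussian

/-! ### Exponential moments of Gaussian quadratic forms -/

lemma lintegral_exp_mul_sq_gaussianReal {x : ℝ} (hx : x < 1 / 2) :
    ∫⁻ y, ENNReal.ofReal (Real.exp (x * y ^ 2)) ∂gaussianReal 0 1
      = ENNReal.ofReal (√(1 - 2 * x))⁻¹ := by
  have hb : 0 < 1 / 2 - x := by linarith
  have hdens : ∀ y : ℝ, (gaussianPDF 0 1 * fun y => ENNReal.ofReal (Real.exp (x * y ^ 2))) y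
      = ENNReal.ofReal ((√(2 * Real.pi))⁻¹ * Real.exp (-(1 / 2 - x) * y ^ 2)) := fun y => by
    simp only [gaussianPDF, Pi.mul_apply, gaussianPDFReal]
    rw [← ENNReal.ofReal_mul (by positivity), mul_assoc (√_)⁻¹, ← Real.exp_add, NNReal.coe_one]
    ring_nf
  have hratio : Real.pi / (1 / 2 - x) = 2 * Real.pi * (1 - 2 * x)⁻¹ := by
    have : 1 - 2 * x ≠ 0 := by linarith
    field_simp
  rw [gaussianReal_of_var_ne_zero _ one_ne_zero,
    lintegral_withDensity_eq_lintegral_mul _ (measurable_gaussianPDF _ _) (by fun_prop),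
    lintegral_congr hdens, ← ofReal_integral_eq_lintegral_ofReal
      ((integrable_exp_neg_mul_sq hb).const_mul _) (ae_of_all _ fun y => by positivity),
    integral_const_mul, integral_gaussian, hratio,
    Real.sqrt_mul (by positivity : 0 ≤ 2 * Real.pi), Real.sqrt_inv,
    inv_mul_cancel_left₀ (by positivity)]

/-- A positively homogeneous bound for the cumulant generating function of the square of a standard
Gaussian variable near the origin: `2 x` for `x ≥ 0` and `x / 2` for `x ≤ 0`. -/
def chiSqBound (x : ℝ) : ℝ := max (2 * x) (x / 2)

lemma chiSqBound_mul {c : ℝ} (hc : 0 ≤ c) (x : ℝ) : chiSqBound (c * x) = c * chiSqBound x := by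
  rw [chiSqBound, chiSqBound, mul_max_of_nonneg _ _ hc, mul_left_comm, mul_div_assoc]

lemma chiSqBound_of_nonneg {x : ℝ} (hx : 0 ≤ x) : chiSqBound x = 2 * x :=
  max_eq_left (by linarith)

lemma chiSqBound_of_nonpos {x : ℝ} (hx : x ≤ 0) : chiSqBound x = x / 2 :=
  max_eq_right (by linarith)

lemma abs_chiSqBound_le (x : ℝ) : |chiSqBound x| ≤ 2 * |x| := by
  rcases le_total 0 x with hx | hx
  · rw [chiSqBound_of_nonneg hx, abs_mul, abs_two]
  · rw [chiSqBound_of_nonpos hx, abs_div, abs_two]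
    linarith [abs_nonneg x]

lemma exp_neg_two_mul_chiSqBound_le {x : ℝ} (hx : |x| ≤ 1 / 4) :
    Real.exp (-(2 * chiSqBound x)) ≤ 1 - 2 * x := by
  obtain ⟨hlo, hhi⟩ := abs_le.1 hx
  rcases le_total 0 x with h0 | h0
  · have hexp : 1 + 4 * x ≤ Real.exp (4 * x) := by linarith [Real.add_one_le_exp (4 * x)]
    rw [chiSqBound_of_nonneg h0, Real.exp_neg, inv_le_comm₀ (Real.exp_pos _) (by linarith),
      inv_le_iff_one_le_mul₀ (by linarith), show 2 * (2 * x) = 4 * x by ring]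
    nlinarith
  · have hexp : 1 + x ≤ Real.exp x := by linarith [Real.add_one_le_exp x]
    rw [chiSqBound_of_nonpos h0, Real.exp_neg, inv_le_comm₀ (Real.exp_pos _) (by linarith),
      inv_le_iff_one_le_mul₀ (by linarith), show 2 * (x / 2) = x by ring]
    nlinarith

lemma lintegral_exp_mul_sq_gaussianReal_le {x : ℝ} (hx : |x| ≤ 1 / 4) :
    ∫⁻ y, ENNReal.ofReal (Real.exp (x * y ^ 2)) ∂gaussianReal 0 1
      ≤ ENNReal.ofReal (Real.exp (chiSqBound x)) := by
  rw [lintegral_exp_mul_sq_gaussianReal (by linarith [le_abs_self x])]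
  refine ENNReal.ofReal_le_ofReal (inv_le_of_inv_le₀ (Real.exp_pos _) (Real.le_sqrt_of_sq_le ?_))
  rw [← Real.exp_neg, ← Real.exp_nat_mul, Nat.cast_ofNat, mul_neg]
  exact exp_neg_two_mul_chiSqBound_le hx

section QuadraticForms

variable {ι κ : Type*} [Fintype ι] [Fintype κ]

lemma exists_orthogonal_sqNorm_mulVec_eq_sum (A : Matrix κ ι ℝ) :
    ∃ (O : Matrix ι ι ℝ) (w : ι → ℝ), O * Oᵀ = 1 ∧ ∑ i, w i = frobSq A ∧
      ∀ y, sqNorm (A *ᵥ O *ᵥ y) = ∑ i, w i * y i ^ 2 := by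
  have hA : (Aᵀ * A).IsHermitian := by
    simpa [conjTranspose_eq_transpose_of_trivial] using isHermitian_conjTranspose_mul_self A
  let O : Matrix ι ι ℝ := hA.eigenvectorUnitary
  have hO : Oᵀ * O = 1 := by
    simpa [star_eq_conjTranspose, conjTranspose_eq_transpose_of_trivial] using
      mem_unitaryGroup_iff'.1 hA.eigenvectorUnitary.2
  have hdiag : (A * O)ᵀ * (A * O) = diagonal hA.eigenvalues := by
    have := hA.conjStarAlgAut_star_eigenvectorUnitary
    rw [Unitary.conjStarAlgAut_star_apply, star_eq_conjTranspose,
      conjTranspose_eq_transpose_of_trivial] at this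
    rw [transpose_mul, Matrix.mul_assoc, ← Matrix.mul_assoc Aᵀ, ← Matrix.mul_assoc]
    exact this
  refine ⟨O, hA.eigenvalues, mul_eq_one_comm.1 hO, ?_, fun y => ?_⟩
  · rw [frobSq_eq_trace]
    exact hA.trace_eq_sum_eigenvalues.symm
  · rw [mulVec_mulVec, sqNorm_mulVec, hdiag, dotProduct]
    exact Finset.sum_congr rfl fun i _ => by rw [mulVec_diagonal]; ring

lemma lintegral_exp_sqNorm_mulVec_le {A : Matrix κ ι ℝ} {L s : ℝ}
    (hA : ∀ x, sqNorm (A *ᵥ x) ≤ L * sqNorm x) (hs : |s| * L ≤ 1 / 4) :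
    ∫⁻ x, ENNReal.ofReal (Real.exp (s * sqNorm (A *ᵥ x))) ∂𝒩 ι
      ≤ ENNReal.ofReal (Real.exp (chiSqBound s * frobSq A)) := by
  obtain ⟨O, w, hO, hsum, hform⟩ := exists_orthogonal_sqNorm_mulVec_eq_sum A
  have hw : ∀ i, w i = sqNorm (A *ᵥ O *ᵥ Pi.single i 1) := fun i => by
    rw [hform]
    simp [Pi.single_apply]
  have hw0 : ∀ i, 0 ≤ w i := fun i => hw i ▸ sqNorm_nonneg _
  have hwL : ∀ i, w i ≤ L := fun i => by
    have := hA (O *ᵥ Pi.single i 1)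
    rwa [sqNorm_mulVec_of_transpose_mul_self (mul_eq_one_comm.1 hO), sqNorm_single, mul_one,
      ← hw] at this
  have hsw : ∀ i, |s * w i| ≤ 1 / 4 := fun i => by
    rw [abs_mul, abs_of_nonneg (hw0 i)]
    exact (mul_le_mul_of_nonneg_left (hwL i) (abs_nonneg s)).trans hs
  calc ∫⁻ x, ENNReal.ofReal (Real.exp (s * sqNorm (A *ᵥ x))) ∂𝒩 ι
      = ∫⁻ y, ∏ i, ENNReal.ofReal (Real.exp (s * w i * y i ^ 2)) ∂𝒩 ι := by
        conv_lhs => rw [← map_mulVec_stdGaussian hO]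
        rw [lintegral_map (by fun_prop) (by fun_prop)]
        refine lintegral_congr fun y => ?_
        rw [← ENNReal.ofReal_prod_of_nonneg fun _ _ => (Real.exp_pos _).le, ← Real.exp_sum, hform,
          Finset.mul_sum]
        simp only [mul_assoc]
    _ = ∏ i, ∫⁻ y, ENNReal.ofReal (Real.exp (s * w i * y ^ 2)) ∂gaussianReal 0 1 :=
        lintegral_pi_prod (f := fun i y => ENNReal.ofReal (Real.exp (s * w i * y ^ 2)))
          (fun _ => gaussianReal 0 1) fun i => by fun_prop
    _ ≤ ∏ i, ENNReal.ofReal (Real.exp (w i * chiSqBound s)) := by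
        refine Finset.prod_le_prod' fun i _ => ?_
        rw [← chiSqBound_mul (hw0 i), mul_comm (w i)]
        exact lintegral_exp_mul_sq_gaussianReal_le (hsw i)
    _ = ENNReal.ofReal (Real.exp (chiSqBound s * frobSq A)) := by
        rw [← ENNReal.ofReal_prod_of_nonneg fun _ _ => (Real.exp_pos _).le, ← Real.exp_sum,
          ← Finset.sum_mul, hsum, mul_comm]

end QuadraticForms

lemma measure_ge_le_exp_of_lintegral_exp_le {X : Type*} [MeasurableSpace X] {μ : Measure X}
    {f : X → ℝ} (hf : Measurable f) {b : ℝ}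
    (h : ∫⁻ x, ENNReal.ofReal (Real.exp (f x)) ∂μ ≤ ENNReal.ofReal (Real.exp b)) (a : ℝ) :
    μ {x | a ≤ f x} ≤ ENNReal.ofReal (Real.exp (b - a)) := by
  have hset : {x | a ≤ f x}
      = {x | ENNReal.ofReal (Real.exp a) ≤ ENNReal.ofReal (Real.exp (f x))} := by
    ext x
    simp [ENNReal.ofReal_le_ofReal_iff (Real.exp_pos _).le]
  rw [hset, Real.exp_sub, ENNReal.ofReal_div_of_pos (Real.exp_pos a)]
  exact (meas_ge_le_lintegral_div (by fun_prop) (by simp [Real.exp_pos])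
    ENNReal.ofReal_ne_top).trans (ENNReal.div_le_div_right h _)

/-! ### The law of the transcript -/

/-- The space of transcripts: the responses to `k` measurements in each of `t` rounds. -/
abbrev Transcript (k t : ℕ) : Type := Fin t → Fin k → ℝ

namespace QueryMaps

variable {N k t : ℕ}

/-- The part of a transcript that precedes round `j`. -/
def before (h : Transcript k t) (j : Fin t) : Fin (j : ℕ) → Fin k → ℝ :=
  fun i => h ⟨i.1, i.isLt.trans j.isLt⟩

/-- The squared norm of the projection of `a` onto the span of all queries asked along the
transcript `h`. -/
def energy (Q : QueryMaps N k t) (a : Fin N → ℝ) (h : Transcript k t) : ℝ :=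
  ∑ j, sqNorm (Q j (before h j) *ᵥ a)

/-- The log-likelihood ratio, at the transcript `h`, of the Gaussian input shifted by `a` to the
unshifted one. -/
def logDens (Q : QueryMaps N k t) (a : Fin N → ℝ) (h : Transcript k t) : ℝ :=
  ∑ j, ((Q j (before h j) *ᵥ a) ⬝ᵥ h j - sqNorm (Q j (before h j) *ᵥ a) / 2)

section

variable (Q : QueryMaps N k t)

lemma energy_nonneg (a : Fin N → ℝ) (h : Transcript k t) : 0 ≤ Q.energy a h :=
  Finset.sum_nonneg fun _ _ => sqNorm_nonneg _

lemma logDens_two_smul (a : Fin N → ℝ) (h : Transcript k t) :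
    Q.logDens ((2 : ℝ) • a) h = 2 * Q.logDens a h - Q.energy a h := by
  simp only [logDens, energy, Finset.mul_sum, ← Finset.sum_sub_distrib, mulVec_smul,
    smul_dotProduct, sqNorm_smul, smul_eq_mul]
  exact Finset.sum_congr rfl fun j _ => by ring

lemma resp_eq (a : Fin N → ℝ) (j : Fin t) : Q.resp a j = Q j (before (Q.resp a) j) *ᵥ a := by
  rw [resp]; rfl

variable {Q}

lemma eq_resp_of_forall {a : Fin N → ℝ} {h : Transcript k t}
    (hh : ∀ j, h j = Q j (before h j) *ᵥ a) : h = Q.resp a := by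
  suffices ∀ (m : ℕ) (j : Fin t), (j : ℕ) = m → h j = Q.resp a j from
    funext fun j => this _ j rfl
  intro m
  induction m using Nat.strong_induction_on with
  | _ m ih =>
    rintro j rfl
    have : before h j = before (Q.resp a) j := funext fun i => ih i i.isLt _ rfl
    rw [hh, resp_eq, this]

lemma resp_congr {a b : Fin N → ℝ} (hab : ∀ j h, Q j h *ᵥ a = Q j h *ᵥ b) :
    Q.resp a = Q.resp b :=
  eq_resp_of_forall fun j => by rw [← hab, ← resp_eq]

lemma measurable_before (j : Fin t) : Measurable fun h : Transcript k t => before h j :=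
  measurable_pi_lambda _ fun _ => measurable_pi_apply _

lemma measurable_resp {X : Type*} [MeasurableSpace X] {Q : X → QueryMaps N k t}
    (hQ : ∀ (j : Fin t) (i : Fin k) (l : Fin N),
      Measurable fun p : X × (Fin (j : ℕ) → Fin k → ℝ) => Q p.1 j p.2 i l)
    {a : X → Fin N → ℝ} (ha : Measurable a) : Measurable fun x => (Q x).resp (a x) := by
  suffices ∀ (m : ℕ) (j : Fin t), (j : ℕ) = m → Measurable fun x => (Q x).resp (a x) j from
    measurable_pi_lambda _ fun j => this _ j rfl
  intro m
  induction m using Nat.strong_induction_on with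
  | _ m ih =>
    rintro j rfl
    have hbefore : Measurable fun x => before ((Q x).resp (a x)) j :=
      measurable_pi_lambda _ fun i => ih i i.isLt ⟨i.1, i.isLt.trans j.isLt⟩ rfl
    simp_rw [resp_eq]
    exact measurable_mulVec (fun i l => (hQ j i l).comp (measurable_id.prodMk hbefore)) ha

lemma Valid.measurable_resp (hQ : Q.Valid) : Measurable Q.resp :=
  QueryMaps.measurable_resp (Q := fun _ => Q) (fun j i l => (hQ.1 j i l).comp measurable_snd)
    measurable_id

section

variable {X : Type*} [MeasurableSpace X] {a : X → Fin N → ℝ} {h : X → Transcript k t}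

lemma Valid.measurable_query_mulVec (hQ : Q.Valid) (ha : Measurable a) (hh : Measurable h)
    (j : Fin t) : Measurable fun x => Q j (before (h x) j) *ᵥ a x :=
  measurable_mulVec (fun i l => (hQ.1 j i l).comp ((measurable_before j).comp hh)) ha

lemma Valid.measurable_energy (hQ : Q.Valid) (ha : Measurable a) (hh : Measurable h) :
    Measurable fun x => Q.energy (a x) (h x) :=
  Finset.measurable_sum _ fun j _ => measurable_sqNorm.comp (hQ.measurable_query_mulVec ha hh j)

lemma Valid.measurable_logDens (hQ : Q.Valid) (ha : Measurable a) (hh : Measurable h) :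
    Measurable fun x => Q.logDens (a x) (h x) := by
  refine Finset.measurable_sum _ fun j _ => ?_
  have hq := hQ.measurable_query_mulVec ha hh j
  exact (measurable_dotProduct hq ((measurable_pi_apply j).comp hh)).sub
    ((measurable_sqNorm.comp hq).div_const 2)

end

end

section FirstRound

variable (Q : QueryMaps N k (t + 1))

/-- The first query, which depends on no history. -/
def first : Matrix (Fin k) (Fin N) ℝ := Q 0 Fin.elim0

/-- The algorithm that remains after the first round has been answered by `r`. -/
def tail (r : Fin k → ℝ) : QueryMaps N k t :=
  fun j h => Q j.succ (Fin.cons (α := fun _ => Fin k → ℝ) r h)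

lemma before_cons_succ (r : Fin k → ℝ) (h : Transcript k t) (j : Fin t) :
    before (Fin.cons (α := fun _ => Fin k → ℝ) r h) j.succ
      = Fin.cons (α := fun _ => Fin k → ℝ) r (before h j) :=
  funext <| Fin.cases rfl fun _ => rfl

lemma query_zero (h : Fin ((0 : Fin (t + 1)) : ℕ) → Fin k → ℝ) : Q 0 h = Q.first :=
  congrArg (Q 0) (funext fun i => i.elim0)

variable {Q}

lemma Valid.first_mul_transpose (hQ : Q.Valid) : Q.first * Q.firstᵀ = 1 := hQ.2.1 0 _

lemma Valid.tail (hQ : Q.Valid) (r : Fin k → ℝ) : (Q.tail r).Valid := by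
  refine ⟨fun j i l => (hQ.1 j.succ i l).comp (measurable_fin_cons measurable_const measurable_id),
    fun j h => hQ.2.1 _ _, fun j i hij h => ?_⟩
  have hprefix : prefixHist (j := j.succ) (i := i.succ)
      (Fin.cons (α := fun _ => Fin k → ℝ) r h) (Nat.succ_lt_succ hij)
        = Fin.cons (α := fun _ => Fin k → ℝ) r (prefixHist h hij) :=
    funext <| Fin.cases rfl fun _ => rfl
  have := hQ.2.2 j.succ i.succ (Nat.succ_lt_succ hij) (Fin.cons (α := fun _ => Fin k → ℝ) r h)
  rwa [hprefix] at this

lemma Valid.tail_mul_first_transpose (hQ : Q.Valid) (r : Fin k → ℝ) (j : Fin t)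
    (h : Fin (j : ℕ) → Fin k → ℝ) : Q.tail r j h * Q.firstᵀ = 0 := by
  have := hQ.2.2 j.succ 0 (Nat.succ_pos _) (Fin.cons (α := fun _ => Fin k → ℝ) r h)
  rwa [Q.query_zero] at this

variable (Q)

lemma resp_eq_cons (a : Fin N → ℝ) :
    Q.resp a = Fin.cons (α := fun _ => Fin k → ℝ) (Q.first *ᵥ a)
      ((Q.tail (Q.first *ᵥ a)).resp a) := by
  refine (eq_resp_of_forall <| Fin.cases ?_ fun j => ?_).symm
  · rw [Fin.cons_zero]; exact congrArg (· *ᵥ a) (Q.query_zero _).symm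
  · rw [before_cons_succ, Fin.cons_succ, resp_eq, tail]

lemma logDens_cons (a : Fin N → ℝ) (r : Fin k → ℝ) (h : Transcript k t) :
    Q.logDens a (Fin.cons (α := fun _ => Fin k → ℝ) r h)
      = ((Q.first *ᵥ a) ⬝ᵥ r - sqNorm (Q.first *ᵥ a) / 2) + (Q.tail r).logDens a h := by
  simp only [logDens, Fin.sum_univ_succ, query_zero, before_cons_succ, Fin.cons_zero,
    Fin.cons_succ, tail]

variable {Q}

/-- The component of the input orthogonal to the first query rows affects only the later rounds,
and the component along them only the first. -/
lemma Valid.resp_first_split (hQ : Q.Valid) (r : Fin k → ℝ) (g a : Fin N → ℝ) :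
    Q.resp (Q.firstᵀ *ᵥ r + (1 - Q.firstᵀ * Q.first) *ᵥ g + a)
      = Fin.cons (α := fun _ => Fin k → ℝ) (r + Q.first *ᵥ a)
          ((Q.tail (r + Q.first *ᵥ a)).resp (g + a)) := by
  have hfirst : Q.first *ᵥ (Q.firstᵀ *ᵥ r + (1 - Q.firstᵀ * Q.first) *ᵥ g + a)
      = r + Q.first *ᵥ a := by
    simp only [mulVec_add, mulVec_mulVec, hQ.first_mul_transpose, Matrix.mul_sub,
      ← Matrix.mul_assoc]
    simp
  rw [resp_eq_cons, hfirst]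
  congr 1
  refine resp_congr fun j h => ?_
  simp only [mulVec_add, mulVec_mulVec, hQ.tail_mul_first_transpose, Matrix.mul_sub,
    ← Matrix.mul_assoc]
  simp

lemma Valid.measurable_tail_logDens (hQ : Q.Valid) (a : Fin N → ℝ) :
    Measurable fun p : (Fin k → ℝ) × Transcript k t => (Q.tail p.1).logDens a p.2 := by
  have htail : ∀ p : (Fin k → ℝ) × Transcript k t, (Q.tail p.1).logDens a p.2
      = Q.logDens a (Fin.cons (α := fun _ => Fin k → ℝ) p.1 p.2)
        - ((Q.first *ᵥ a) ⬝ᵥ p.1 - sqNorm (Q.first *ᵥ a) / 2) := fun p => by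
    rw [logDens_cons]; ring
  simp_rw [htail]
  exact (hQ.measurable_logDens measurable_const
    (measurable_fin_cons measurable_fst measurable_snd)).sub (by fun_prop)

end FirstRound

theorem Valid.lintegral_resp {Q : QueryMaps N k t} (hQ : Q.Valid) (a : Fin N → ℝ)
    {f : Transcript k t → ℝ≥0∞} (hf : Measurable f) :
    ∫⁻ g, f (Q.resp (g + a)) ∂𝒩 (Fin N)
      = ∫⁻ h, ENNReal.ofReal (Real.exp (Q.logDens a h)) * f h ∂gaussianMatrix (Fin t) (Fin k) := by
  induction t with
  | zero =>
    have hconst : ∀ h : Transcript k 0, f h = f default := fun h => by rw [Subsingleton.elim h]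
    simp [hconst, logDens]
  | succ t ih =>
    have hcons : Measurable fun p : (Fin k → ℝ) × Transcript k t =>
        f (Fin.cons (α := fun _ => Fin k → ℝ) p.1 p.2) :=
      hf.comp (measurable_fin_cons measurable_fst measurable_snd)
    have hresp : Measurable Q.resp := hQ.measurable_resp
    have hlogDens : Measurable (Q.logDens a) :=
      hQ.measurable_logDens measurable_const measurable_id
    have hdens : Measurable fun p : (Fin k → ℝ) × Transcript k t =>
        ENNReal.ofReal (Real.exp ((Q.tail p.1).logDens a p.2))
          * f (Fin.cons (α := fun _ => Fin k → ℝ) p.1 p.2) :=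
      (hQ.measurable_tail_logDens a).exp.ennreal_ofReal.mul hcons
    set b := Q.first *ᵥ a with hb
    calc ∫⁻ g, f (Q.resp (g + a)) ∂𝒩 (Fin N)
        = ∫⁻ r, ∫⁻ g, f (Fin.cons (α := fun _ => Fin k → ℝ) (r + b)
            ((Q.tail (r + b)).resp (g + a))) ∂𝒩 (Fin N) ∂𝒩 (Fin k) := by
          rw [lintegral_stdGaussian_split hQ.first_mul_transpose
            (f := fun g => f (Q.resp (g + a))) (by fun_prop)]
          simp only [hQ.resp_first_split, hb]
      _ = ∫⁻ r, ∫⁻ h, ENNReal.ofReal (Real.exp ((Q.tail (r + b)).logDens a h))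
            * f (Fin.cons (α := fun _ => Fin k → ℝ) (r + b) h)
              ∂gaussianMatrix (Fin t) (Fin k) ∂𝒩 (Fin k) :=
          lintegral_congr fun r => ih (hQ.tail _) (hcons.comp measurable_prodMk_left)
      _ = ∫⁻ r, ∫⁻ h, ENNReal.ofReal (Real.exp (b ⬝ᵥ r - sqNorm b / 2))
            * (ENNReal.ofReal (Real.exp ((Q.tail r).logDens a h))
              * f (Fin.cons (α := fun _ => Fin k → ℝ) r h))
              ∂gaussianMatrix (Fin t) (Fin k) ∂𝒩 (Fin k) := by
          rw [lintegral_stdGaussian_add b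
            (f := fun r => ∫⁻ h, ENNReal.ofReal (Real.exp ((Q.tail r).logDens a h))
              * f (Fin.cons (α := fun _ => Fin k → ℝ) r h) ∂gaussianMatrix (Fin t) (Fin k))
            hdens.lintegral_prod_right']
          exact lintegral_congr fun r =>
            (lintegral_const_mul _ (hdens.comp measurable_prodMk_left)).symm
      _ = ∫⁻ h, ENNReal.ofReal (Real.exp (Q.logDens a h)) * f h
            ∂gaussianMatrix (Fin (t + 1)) (Fin k) := by
          rw [lintegral_gaussianMatrix_succ (by fun_prop)]
          simp only [logDens_cons, Real.exp_add,
            ENNReal.ofReal_mul (Real.exp_pos _).le, mul_assoc, hb]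

section LastRound

variable (Q : QueryMaps N k (t + 1))

/-- The algorithm stopped before its last round. -/
def dropLast : QueryMaps N k t := fun j h => Q j.castSucc h

lemma Valid.dropLast {Q : QueryMaps N k (t + 1)} (hQ : Q.Valid) : Q.dropLast.Valid :=
  ⟨fun j i l => hQ.1 j.castSucc i l, fun j h => hQ.2.1 j.castSucc h,
    fun j i hij h => hQ.2.2 j.castSucc i.castSucc hij h⟩

lemma resp_dropLast (a : Fin N → ℝ) : Q.dropLast.resp a = fun j => Q.resp a j.castSucc :=
  (eq_resp_of_forall fun j => Q.resp_eq a j.castSucc).symm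

/-- The query of the last round, as a function of the transcript of the previous rounds. -/
def lastQuery (h : Transcript k t) : Matrix (Fin k) (Fin N) ℝ := Q (Fin.last t) h

lemma energy_resp_eq_dropLast_add (a b : Fin N → ℝ) :
    Q.energy a (Q.resp b) = Q.dropLast.energy a (Q.dropLast.resp b)
      + sqNorm (Q.lastQuery (Q.dropLast.resp b) *ᵥ a) := by
  rw [energy, Fin.sum_univ_castSucc, resp_dropLast]
  rfl

lemma Valid.lastQuery_mul_transpose {Q : QueryMaps N k (t + 1)} (hQ : Q.Valid)
    (h : Transcript k t) : Q.lastQuery h * (Q.lastQuery h)ᵀ = 1 :=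
  hQ.2.1 (Fin.last t) h

lemma Valid.measurable_lastQuery {Q : QueryMaps N k (t + 1)} (hQ : Q.Valid) (i : Fin k)
    (l : Fin N) : Measurable fun h => Q.lastQuery h i l :=
  hQ.1 (Fin.last t) i l

end LastRound

end QueryMaps

/-! ### Information gained by the algorithm -/

/-- This is `x + 1 ≤ exp x` at `x = f - b - l` and at `x = l - e`, weighted by `exp l`. -/
lemma exp_mul_add_two_mul_exp_le (l e f b : ℝ) :
    Real.exp l * f + Real.exp l * 2
      ≤ Real.exp l * e + Real.exp l * b + Real.exp (2 * l - e) + Real.exp (-b) * Real.exp f := by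
  have hf := mul_le_mul_of_nonneg_left (Real.add_one_le_exp (f - b - l)) (Real.exp_pos l).le
  have he := mul_le_mul_of_nonneg_left (Real.add_one_le_exp (l - e)) (Real.exp_pos l).le
  rw [← Real.exp_add] at hf he
  rw [← Real.exp_add]
  ring_nf at *
  linarith

/-- A Donsker–Varadhan type inequality: when `exp (2 * ℓ - E)` is a sub-probability density, the
mean of `E` under the density `exp ℓ` takes the place of its relative entropy. -/
theorem lintegral_exp_mul_le {X : Type*} [MeasurableSpace X] {ν : Measure X}
    {ℓ E F : X → ℝ} (hℓ : Measurable ℓ) (hE : Measurable E) (hF : Measurable F)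
    (hE0 : ∀ x, 0 ≤ E x) (hF0 : ∀ x, 0 ≤ F x) {B : ℝ} (hB : 0 ≤ B)
    (h_one : ∫⁻ x, ENNReal.ofReal (Real.exp (ℓ x)) ∂ν = 1)
    (h_two : ∫⁻ x, ENNReal.ofReal (Real.exp (2 * ℓ x - E x)) ∂ν ≤ 1)
    (h_exp : ∫⁻ x, ENNReal.ofReal (Real.exp (F x)) ∂ν ≤ ENNReal.ofReal (Real.exp B)) :
    ∫⁻ x, ENNReal.ofReal (Real.exp (ℓ x)) * ENNReal.ofReal (F x) ∂ν
      ≤ ∫⁻ x, ENNReal.ofReal (Real.exp (ℓ x)) * ENNReal.ofReal (E x) ∂ν + ENNReal.ofReal B := by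
  have hlast : ENNReal.ofReal (Real.exp (-B)) * ∫⁻ x, ENNReal.ofReal (Real.exp (F x)) ∂ν ≤ 1 := by
    calc _ ≤ ENNReal.ofReal (Real.exp (-B)) * ENNReal.ofReal (Real.exp B) := by gcongr
      _ = 1 := by rw [← ENNReal.ofReal_mul (Real.exp_pos _).le, ← Real.exp_add]; simp
  have hpoint : ∀ x, ENNReal.ofReal (Real.exp (ℓ x)) * ENNReal.ofReal (F x)
        + ENNReal.ofReal (Real.exp (ℓ x)) * ENNReal.ofReal 2
      ≤ ENNReal.ofReal (Real.exp (ℓ x)) * ENNReal.ofReal (E x)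
        + ENNReal.ofReal (Real.exp (ℓ x)) * ENNReal.ofReal B
        + ENNReal.ofReal (Real.exp (2 * ℓ x - E x))
        + ENNReal.ofReal (Real.exp (-B)) * ENNReal.ofReal (Real.exp (F x)) := by
    intro x
    have := hE0 x
    have := hF0 x
    simp only [← ENNReal.ofReal_mul (Real.exp_pos _).le]
    repeat rw [← ENNReal.ofReal_add (by positivity) (by positivity)]
    exact ENNReal.ofReal_le_ofReal (exp_mul_add_two_mul_exp_le _ _ _ _)
  have hint := lintegral_mono (μ := ν) hpoint
  rw [lintegral_add_right _ (by fun_prop), lintegral_add_right _ (by fun_prop),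
    lintegral_add_right _ (by fun_prop), lintegral_add_right _ (by fun_prop),
    lintegral_mul_const _ (by fun_prop), lintegral_mul_const _ (by fun_prop),
    lintegral_const_mul _ (by fun_prop), h_one, one_mul, one_mul] at hint
  refine (ENNReal.add_le_add_iff_right (ENNReal.ofReal_ne_top (r := 2))).1 (hint.trans ?_)
  calc _ ≤ ∫⁻ x, ENNReal.ofReal (Real.exp (ℓ x)) * ENNReal.ofReal (E x) ∂ν + ENNReal.ofReal B
        + 1 + 1 := by gcongr
    _ = _ := by rw [add_assoc _ (1 : ℝ≥0∞)]; norm_num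

namespace QueryMaps

variable {N k t : ℕ} {Θ : Type*} [MeasurableSpace Θ]

/-- The joint law of the transcript and of the hidden parameter `θ ∼ π`, when the input is a
standard Gaussian vector shifted by the signal `a θ`. -/
def jointLaw (Q : QueryMaps N k t) (π : Measure Θ) (a : Θ → Fin N → ℝ) :
    Measure (Transcript k t × Θ) :=
  ((𝒩 (Fin N)).prod π).map fun p => (Q.resp (p.1 + a p.2), p.2)

section

variable {Q : QueryMaps N k t} {π : Measure Θ} {a : Θ → Fin N → ℝ}

lemma Valid.measurable_resp_add (hQ : Q.Valid) (ha : Measurable a) :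
    Measurable fun p : (Fin N → ℝ) × Θ => (Q.resp (p.1 + a p.2), p.2) :=
  (hQ.measurable_resp.comp (by fun_prop)).prodMk measurable_snd

lemma Valid.isProbabilityMeasure_jointLaw (hQ : Q.Valid) (ha : Measurable a)
    [IsProbabilityMeasure π] : IsProbabilityMeasure (Q.jointLaw π a) :=
  Measure.isProbabilityMeasure_map (hQ.measurable_resp_add ha).aemeasurable

lemma Valid.lintegral_jointLaw (hQ : Q.Valid) (ha : Measurable a) [SFinite π]
    {f : Transcript k t × Θ → ℝ≥0∞} (hf : Measurable f) :
    ∫⁻ p, f p ∂Q.jointLaw π a = ∫⁻ θ, ∫⁻ g, f (Q.resp (g + a θ), θ) ∂𝒩 (Fin N) ∂π := by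
  have hresp := hQ.measurable_resp_add ha
  rw [jointLaw, lintegral_map hf hresp, lintegral_prod_symm]
  exact (hf.comp hresp).aemeasurable

lemma Valid.jointLaw_eq_withDensity (hQ : Q.Valid) (ha : Measurable a) [SFinite π] :
    Q.jointLaw π a = ((gaussianMatrix (Fin t) (Fin k)).prod π).withDensity
      fun p => ENNReal.ofReal (Real.exp (Q.logDens (a p.2) p.1)) := by
  have hdens : Measurable fun p : Transcript k t × Θ =>
      ENNReal.ofReal (Real.exp (Q.logDens (a p.2) p.1)) :=
    (hQ.measurable_logDens (ha.comp measurable_snd) measurable_fst).exp.ennreal_ofReal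
  refine Measure.ext_of_lintegral _ fun f hf => ?_
  rw [hQ.lintegral_jointLaw ha hf, lintegral_withDensity_eq_lintegral_mul _ hdens hf,
    lintegral_prod_symm _ (hdens.mul hf).aemeasurable]
  exact lintegral_congr fun θ => hQ.lintegral_resp (a θ) (hf.comp measurable_prodMk_right)

/-- The mean of a statistic of the transcript and the parameter exceeds its log-exponential moment
under independence by at most the energy of the signal seen by the algorithm. The log-likelihood
ratio of the doubled signal is `2 * logDens - energy`. -/
theorem Valid.lintegral_jointLaw_le (hQ : Q.Valid) (ha : Measurable a) [IsProbabilityMeasure π]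
    {F : Transcript k t × Θ → ℝ} (hF : Measurable F) (hF0 : ∀ p, 0 ≤ F p) {B : ℝ} (hB : 0 ≤ B)
    (hexp : ∀ h, ∫⁻ θ, ENNReal.ofReal (Real.exp (F (h, θ))) ∂π ≤ ENNReal.ofReal (Real.exp B)) :
    ∫⁻ p, ENNReal.ofReal (F p) ∂Q.jointLaw π a
      ≤ ∫⁻ p, ENNReal.ofReal (Q.energy (a p.2) p.1) ∂Q.jointLaw π a + ENNReal.ofReal B := by
  have hone : ∀ {b : Θ → Fin N → ℝ}, Measurable b →
      ∫⁻ p, ENNReal.ofReal (Real.exp (Q.logDens (b p.2) p.1))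
        ∂(gaussianMatrix (Fin t) (Fin k)).prod π = 1 := by
    intro b hb
    have := hQ.isProbabilityMeasure_jointLaw (π := π) hb
    rw [← setLIntegral_univ, ← withDensity_apply _ .univ, ← hQ.jointLaw_eq_withDensity hb,
      measure_univ]
  have hE : Measurable fun p : Transcript k t × Θ => Q.energy (a p.2) p.1 :=
    hQ.measurable_energy (ha.comp measurable_snd) measurable_fst
  have hℓ : Measurable fun p : Transcript k t × Θ => Q.logDens (a p.2) p.1 :=
    hQ.measurable_logDens (ha.comp measurable_snd) measurable_fst
  rw [hQ.jointLaw_eq_withDensity ha,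
    lintegral_withDensity_eq_lintegral_mul _ (by fun_prop) (by fun_prop),
    lintegral_withDensity_eq_lintegral_mul _ (by fun_prop) (by fun_prop)]
  refine lintegral_exp_mul_le hℓ hE hF (fun _ => Q.energy_nonneg _ _) hF0 hB (hone ha) ?_ ?_
  · simpa only [Pi.smul_apply, logDens_two_smul] using (hone (ha.const_smul (2 : ℝ))).le
  · rw [lintegral_prod _ (by fun_prop)]
    calc _ ≤ ∫⁻ _, ENNReal.ofReal (Real.exp B) ∂gaussianMatrix (Fin t) (Fin k) :=
          lintegral_mono hexp
      _ = ENNReal.ofReal (Real.exp B) := by simp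

end

lemma Valid.measurable_lastQuery_mulVec {Q : QueryMaps N k (t + 1)} (hQ : Q.Valid)
    {a : Θ → Fin N → ℝ} (ha : Measurable a) :
    Measurable fun p : Transcript k t × Θ => Q.lastQuery p.1 *ᵥ a p.2 :=
  measurable_mulVec (fun i l => (hQ.measurable_lastQuery i l).comp measurable_fst)
    (ha.comp measurable_snd)

lemma Valid.lintegral_energy_jointLaw_succ {Q : QueryMaps N k (t + 1)} (hQ : Q.Valid)
    (π : Measure Θ) [SFinite π] {a : Θ → Fin N → ℝ} (ha : Measurable a) :
    ∫⁻ p, ENNReal.ofReal (Q.energy (a p.2) p.1) ∂Q.jointLaw π a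
      = ∫⁻ p, ENNReal.ofReal (Q.dropLast.energy (a p.2) p.1) ∂Q.dropLast.jointLaw π a
        + ∫⁻ p, ENNReal.ofReal (sqNorm (Q.lastQuery p.1 *ᵥ a p.2)) ∂Q.dropLast.jointLaw π a := by
  have hlast := hQ.measurable_lastQuery_mulVec ha
  have henergy : Measurable fun p : Transcript k (t + 1) × Θ => Q.energy (a p.2) p.1 :=
    hQ.measurable_energy (ha.comp measurable_snd) measurable_fst
  have hdrop : Measurable fun p : Transcript k t × Θ => Q.dropLast.energy (a p.2) p.1 :=
    hQ.dropLast.measurable_energy (ha.comp measurable_snd) measurable_fst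
  rw [← lintegral_add_right _ (by fun_prop), hQ.lintegral_jointLaw ha (by fun_prop),
    hQ.dropLast.lintegral_jointLaw ha (by fun_prop)]
  exact lintegral_congr fun θ => lintegral_congr fun g => by
    rw [energy_resp_eq_dropLast_add, ENNReal.ofReal_add (energy_nonneg _ _ _) (sqNorm_nonneg _)]

/-- Each round multiplies the energy by a constant factor: by `Valid.lintegral_jointLaw_le`, what
the next queries can capture of the signal is controlled by the energy captured so far. -/
theorem Valid.lintegral_energy_jointLaw_le {π : Measure Θ} [IsProbabilityMeasure π]
    {a : Θ → Fin N → ℝ} (ha : Measurable a) {c B : ℝ} (hc : 0 < c) (hB : 0 ≤ B)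
    (hexp : ∀ q : Matrix (Fin k) (Fin N) ℝ, q * qᵀ = 1 →
      ∫⁻ θ, ENNReal.ofReal (Real.exp (c * sqNorm (q *ᵥ a θ))) ∂π ≤ ENNReal.ofReal (Real.exp B))
    {Q : QueryMaps N k t} (hQ : Q.Valid) :
    ∫⁻ p, ENNReal.ofReal (Q.energy (a p.2) p.1) ∂Q.jointLaw π a
      ≤ ENNReal.ofReal (((1 + c⁻¹) ^ t - 1) * B) := by
  induction t with
  | zero => simp [energy]
  | succ t ih =>
    have hlast := hQ.measurable_lastQuery_mulVec ha
    have hpow : 0 ≤ (1 + c⁻¹) ^ t - 1 := sub_nonneg.2 (one_le_pow₀ (by simp [hc.le]))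
    have hF : Measurable fun p : Transcript k t × Θ => c * sqNorm (Q.lastQuery p.1 *ᵥ a p.2) := by
      fun_prop
    have hinfo := hQ.dropLast.lintegral_jointLaw_le (π := π) ha hF
      (fun _ => mul_nonneg hc.le (sqNorm_nonneg _)) hB
      fun h => hexp (Q.lastQuery h) (hQ.lastQuery_mul_transpose h)
    have hnext : ∫⁻ p, ENNReal.ofReal (sqNorm (Q.lastQuery p.1 *ᵥ a p.2))
          ∂Q.dropLast.jointLaw π a
        = ENNReal.ofReal c⁻¹ * ∫⁻ p, ENNReal.ofReal (c * sqNorm (Q.lastQuery p.1 *ᵥ a p.2))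
            ∂Q.dropLast.jointLaw π a := by
      rw [← lintegral_const_mul _ (by fun_prop)]
      refine lintegral_congr fun p => ?_
      rw [← ENNReal.ofReal_mul (inv_pos.2 hc).le, inv_mul_cancel_left₀ hc.ne']
    rw [hQ.lintegral_energy_jointLaw_succ π ha, hnext]
    calc _ ≤ ENNReal.ofReal (((1 + c⁻¹) ^ t - 1) * B) + ENNReal.ofReal c⁻¹
          * (ENNReal.ofReal (((1 + c⁻¹) ^ t - 1) * B) + ENNReal.ofReal B) :=
          add_le_add (ih hQ.dropLast) (by
            gcongr
            exact hinfo.trans (by gcongr; exact ih hQ.dropLast))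
      _ = ENNReal.ofReal (((1 + c⁻¹) ^ (t + 1) - 1) * B) := by
          rw [← ENNReal.ofReal_add (by positivity) hB, ← ENNReal.ofReal_mul (by positivity),
            ← ENNReal.ofReal_add (by positivity) (by positivity)]
          congr 1
          ring

end QueryMaps

/-! ### Exponential moments of random low-rank matrices -/

section TensorSum

variable {ρ ι ι' κ : Type*} [Fintype ρ]

/-- `∑ l, U l ⊗ V l`, that is, the entries of the matrix `∑ l, (U l) (V l)ᵀ` indexed by pairs. -/
def tensorSum (U : ρ → ι → ℝ) (V : ρ → ι' → ℝ) : ι × ι' → ℝ := fun p => ∑ l, U l p.1 * V l p.2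

@[fun_prop]
lemma measurable_tensorSum {X : Type*} [MeasurableSpace X] {U : X → ρ → ι → ℝ}
    {V : X → ρ → ι' → ℝ} (hU : Measurable U) (hV : Measurable V) :
    Measurable fun x => tensorSum (U x) (V x) := by
  unfold tensorSum
  fun_prop

variable [Fintype ι']

/-- The families `V` of vectors for which `x ↦ ∑ l, x l • V l` has squared operator norm at most
`L`. -/
def boundedFactor (ρ ι' : Type*) [Fintype ρ] [Fintype ι'] (L : ℝ) : Set (ρ → ι' → ℝ) :=
  {V | ∀ x : ρ → ℝ, sqNorm (x ᵥ* V) ≤ L * sqNorm x}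

lemma measurableSet_boundedFactor (L : ℝ) : MeasurableSet (boundedFactor ρ ι' L) := by
  rw [boundedFactor, Set.ofPred_forall]
  refine (isClosed_iInter fun x => isClosed_le ?_ continuous_const).measurableSet
  unfold sqNorm vecMul dotProduct
  fun_prop

variable [Fintype ι]

lemma sqNorm_tensorSum_le {L : ℝ} {V : ρ → ι' → ℝ} (hV : V ∈ boundedFactor ρ ι' L)
    (x : ρ × ι → ℝ) : sqNorm (tensorSum (fun l i => x (l, i)) V) ≤ L * sqNorm x := by
  calc sqNorm (tensorSum (fun l i => x (l, i)) V) = ∑ i, sqNorm ((fun l => x (l, i)) ᵥ* V) :=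
        Fintype.sum_prod_type _
    _ ≤ ∑ i, L * sqNorm fun l => x (l, i) := Finset.sum_le_sum fun i _ => hV _
    _ = L * sqNorm x := by simp only [sqNorm, Fintype.sum_prod_type_right, Finset.mul_sum]

/-- The matrix representing `x ↦ q (e i ⊗ x)`, for all basis vectors `e i` at once. -/
def splitQuery (q : Matrix κ (ι × ι') ℝ) : Matrix (κ × ι) ι' ℝ := .of fun p j => q p.1 (p.2, j)

/-- The matrix representing `U ↦ q (∑ l, U l ⊗ V l)`. -/
def leftQuery (q : Matrix κ (ι × ι') ℝ) (V : ρ → ι' → ℝ) : Matrix κ (ρ × ι) ℝ :=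
  .of fun k p => (splitQuery q *ᵥ V p.1) (k, p.2)

lemma leftQuery_mulVec (q : Matrix κ (ι × ι') ℝ) (V : ρ → ι' → ℝ) (x : ρ × ι → ℝ) :
    leftQuery q V *ᵥ x = q *ᵥ tensorSum (fun l i => x (l, i)) V := by
  funext k
  simp only [leftQuery, splitQuery, mulVec, dotProduct, tensorSum, of_apply,
    Fintype.sum_prod_type, Finset.mul_sum, Finset.sum_mul]
  rw [Finset.sum_comm]
  refine Finset.sum_congr rfl fun i _ => ?_
  rw [Finset.sum_comm]
  exact Finset.sum_congr rfl fun j _ => Finset.sum_congr rfl fun l _ => by ring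

variable [Fintype κ]

lemma frobSq_splitQuery (q : Matrix κ (ι × ι') ℝ) : frobSq (splitQuery q) = frobSq q := by
  simp [frobSq, splitQuery, Fintype.sum_prod_type]

lemma frobSq_leftQuery (q : Matrix κ (ι × ι') ℝ) (V : ρ → ι' → ℝ) :
    frobSq (leftQuery q V) = ∑ l, sqNorm (splitQuery q *ᵥ V l) := by
  simp only [frobSq, leftQuery, sqNorm, of_apply, Fintype.sum_prod_type]
  exact Finset.sum_comm

lemma sqNorm_splitQuery_mulVec_le {q : Matrix κ (ι × ι') ℝ}
    (hq : ∀ x, sqNorm (q *ᵥ x) ≤ sqNorm x) (v : ι' → ℝ) :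
    sqNorm (splitQuery q *ᵥ v) ≤ Fintype.card ι * sqNorm v := by
  classical
  have hcol : ∀ i k, (splitQuery q *ᵥ v) (k, i)
      = (q *ᵥ fun p => if p.1 = i then v p.2 else 0) k := fun i k => by
    simp [splitQuery, mulVec, dotProduct, Fintype.sum_prod_type_right]
  have hnorm : ∀ i, sqNorm (fun p : ι × ι' => if p.1 = i then v p.2 else 0) = sqNorm v :=
    fun i => by simp [sqNorm, Fintype.sum_prod_type_right]
  calc sqNorm (splitQuery q *ᵥ v)
      = ∑ i, sqNorm (q *ᵥ fun p => if p.1 = i then v p.2 else 0) := by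
        simp only [sqNorm, Fintype.sum_prod_type_right, hcol]
    _ ≤ ∑ _i : ι, sqNorm v := Finset.sum_le_sum fun i _ => (hq _).trans_eq (hnorm i)
    _ = Fintype.card ι * sqNorm v := by simp

lemma lintegral_exp_sqNorm_mulVec_tensorSum_le {q : Matrix κ (ι × ι') ℝ}
    (hq : ∀ x, sqNorm (q *ᵥ x) ≤ sqNorm x) {L s : ℝ} (hs : |s| * L ≤ 1 / 4) {V : ρ → ι' → ℝ}
    (hV : V ∈ boundedFactor ρ ι' L) :
    ∫⁻ U, ENNReal.ofReal (Real.exp (s * sqNorm (q *ᵥ tensorSum U V))) ∂gaussianMatrix ρ ι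
      ≤ ENNReal.ofReal (Real.exp (chiSqBound s * ∑ l, sqNorm (splitQuery q *ᵥ V l))) := by
  have hbound : ∀ x, sqNorm (leftQuery q V *ᵥ x) ≤ L * sqNorm x := fun x => by
    rw [leftQuery_mulVec]
    exact (hq _).trans (sqNorm_tensorSum_le hV x)
  rw [← frobSq_leftQuery]
  refine le_of_eq_of_le ?_ (lintegral_exp_sqNorm_mulVec_le hbound hs)
  rw [← map_uncurry_gaussianMatrix, lintegral_map (by fun_prop) (by fun_prop)]
  simp only [leftQuery_mulVec]

lemma lintegral_exp_sum_sqNorm_mulVec_le {A : Matrix κ ι ℝ} {L s : ℝ}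
    (hA : ∀ x, sqNorm (A *ᵥ x) ≤ L * sqNorm x) (hs : |s| * L ≤ 1 / 4) :
    ∫⁻ V, ENNReal.ofReal (Real.exp (s * ∑ l, sqNorm (A *ᵥ V l))) ∂gaussianMatrix ρ ι
      ≤ ENNReal.ofReal (Real.exp (Fintype.card ρ * (chiSqBound s * frobSq A))) := by
  simp only [Finset.mul_sum, Real.exp_sum,
    ENNReal.ofReal_prod_of_nonneg fun _ _ => (Real.exp_pos _).le]
  rw [gaussianMatrix, lintegral_pi_prod _
    (f := fun _ v => ENNReal.ofReal (Real.exp (s * sqNorm (A *ᵥ v)))) fun _ => by fun_prop]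
  calc _ ≤ ∏ _l : ρ, ENNReal.ofReal (Real.exp (chiSqBound s * frobSq A)) :=
        Finset.prod_le_prod' fun _ _ => lintegral_exp_sqNorm_mulVec_le hA hs
    _ = _ := by
        rw [Finset.prod_const, ← ENNReal.ofReal_pow (Real.exp_pos _).le, ← Real.exp_nat_mul,
          Finset.card_univ]

theorem setLIntegral_exp_sqNorm_mulVec_tensorSum_le {q : Matrix κ (ι × ι') ℝ}
    (hq : ∀ x, sqNorm (q *ᵥ x) ≤ sqNorm x) {L s : ℝ} (hsL : |s| * L ≤ 1 / 4)
    (hsι : |s| * Fintype.card ι ≤ 1 / 8) :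
    ∫⁻ V in boundedFactor ρ ι' L,
        ∫⁻ U, ENNReal.ofReal (Real.exp (s * sqNorm (q *ᵥ tensorSum U V))) ∂gaussianMatrix ρ ι
        ∂gaussianMatrix ρ ι'
      ≤ ENNReal.ofReal
          (Real.exp (Fintype.card ρ * (chiSqBound (chiSqBound s) * frobSq q))) := by
  have hs' : |chiSqBound s| * Fintype.card ι ≤ 1 / 4 := by
    have := mul_le_mul_of_nonneg_right (abs_chiSqBound_le s) (Nat.cast_nonneg (Fintype.card ι))
    linarith
  rw [← frobSq_splitQuery]
  exact (setLIntegral_mono' (measurableSet_boundedFactor L) fun V hV =>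
      lintegral_exp_sqNorm_mulVec_tensorSum_le hq hsL hV).trans <|
    (setLIntegral_le_lintegral _ _).trans <|
      lintegral_exp_sum_sqNorm_mulVec_le (sqNorm_splitQuery_mulVec_le hq) hs'

end TensorSum

/-! ### Operator norms of Gaussian matrices -/

section Net

variable {E F : Type*} [NormedAddCommGroup E] [NormedSpace ℝ E] [NormedAddCommGroup F]
  [NormedSpace ℝ F]

lemma packingNumber_closedBall_le [FiniteDimensional ℝ E] :
    Metric.packingNumber 1 (Metric.closedBall (0 : E) 2) ≤ (5 ^ Module.finrank ℝ E : ℕ) := by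
  refine iSup_le fun C => iSup_le fun hC => iSup_le fun hsep => ?_
  by_contra! hlt
  obtain ⟨u, huC, hu⟩ := Set.exists_subset_encard_eq (Order.add_one_le_of_lt hlt)
  have hfin : u.Finite := Set.finite_of_encard_eq_coe (k := 5 ^ Module.finrank ℝ E + 1) hu
  have hcard := Besicovitch.card_le_of_separated hfin.toFinset
    (fun c hc => by simpa using hC (huC (hfin.mem_toFinset.1 hc))) fun c hc d hd hcd => by
      have hlt : ((1 : NNReal) : ℝ≥0∞) < edist c d :=
        hsep (huC (hfin.mem_toFinset.1 hc)) (huC (hfin.mem_toFinset.1 hd)) hcd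
      rw [edist_dist, dist_eq_norm, ENNReal.coe_one, ENNReal.one_lt_ofReal] at hlt
      exact hlt.le
  rw [hfin.encard_eq_coe_toFinset_card] at hu
  norm_cast at hu
  omega

lemma exists_finset_isCover_closedBall [FiniteDimensional ℝ E] :
    ∃ s : Finset E, s.card ≤ 5 ^ Module.finrank ℝ E ∧ (s : Set E) ⊆ Metric.closedBall 0 2 ∧
      Metric.IsCover 1 (Metric.closedBall 0 2) (s : Set E) := by
  have hcover := (Metric.coveringNumber_le_packingNumber 1 (Metric.closedBall (0 : E) 2)).trans
    packingNumber_closedBall_le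
  obtain ⟨s, hs, hfin, hnet, hcard⟩ := Metric.exists_set_encard_eq_coveringNumber
    (hcover.trans_lt (ENat.natCast_lt_top _)).ne
  lift s to Finset E using hfin
  rw [← hcard, Set.encard_coe_eq_coe_finsetCard, Nat.cast_le] at hcover
  exact ⟨s, hcover, hs, hnet⟩

lemma opNorm_le_of_isCover (T : E →L[ℝ] F) {s : Set E}
    (hs : Metric.IsCover 1 (Metric.closedBall 0 2) s) {C : ℝ} (hC : ∀ y ∈ s, ‖T y‖ ≤ C) :
    ‖T‖ ≤ C := by
  have hC0 : 0 ≤ C := by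
    obtain ⟨y, hy⟩ := hs.nonempty ⟨0, by simp⟩
    exact (norm_nonneg _).trans (hC y hy)
  have hhalf : ‖T‖ ≤ (C + ‖T‖) / 2 := by
    refine T.opNorm_le_of_unit_norm (by positivity) fun x hx => ?_
    obtain ⟨y, hy, hxy⟩ := hs (show (2 : ℝ) • x ∈ Metric.closedBall 0 2 by simp [norm_smul, hx])
    have hdist : ‖(2 : ℝ) • x - y‖ ≤ 1 := by
      rw [← dist_eq_norm]
      exact edist_le_coe.1 hxy
    calc ‖T x‖ = ‖T y + T ((2 : ℝ) • x - y)‖ / 2 := by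
          rw [← map_add, add_sub_cancel, map_smul, norm_smul, Real.norm_two]
          ring
      _ ≤ (‖T y‖ + ‖T‖ * 1) / 2 := by
          gcongr
          exact (norm_add_le _ _).trans (add_le_add_right (T.le_opNorm_of_le hdist) _)
      _ ≤ (C + ‖T‖) / 2 := by
          rw [mul_one]
          gcongr
          exact hC y hy
  linarith

end Net

section BoundedFactor

variable {ρ ι : Type*} [Fintype ρ] [Fintype ι]

lemma mem_boundedFactor_of_isCover {s : Set (EuclideanSpace ℝ ρ)}
    (hs : Metric.IsCover 1 (Metric.closedBall 0 2) s) {L : ℝ} {V : ρ → ι → ℝ}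
    (hV : ∀ y ∈ s, sqNorm (y.ofLp ᵥ* V) ≤ L) : V ∈ boundedFactor ρ ι L := by
  classical
  let T : EuclideanSpace ℝ ρ →L[ℝ] EuclideanSpace ℝ ι :=
    LinearMap.toContinuousLinearMap (Matrix.toEuclideanLin (Matrix.of V)ᵀ)
  have hT : ∀ y, ‖T y‖ ^ 2 = sqNorm (y.ofLp ᵥ* V) := fun y => by
    rw [EuclideanSpace.real_norm_sq_eq, sqNorm]
    simp [T, Matrix.toLpLin_apply, mulVec_transpose]
    rfl
  have hL : 0 ≤ L := by
    obtain ⟨y, hy⟩ := hs.nonempty ⟨0, by simp⟩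
    exact (sqNorm_nonneg _).trans (hV y hy)
  have hop : ‖T‖ ≤ √L := opNorm_le_of_isCover T hs fun y hy =>
    Real.le_sqrt_of_sq_le ((hT y).le.trans (hV y hy))
  intro x
  calc sqNorm (x ᵥ* V) = ‖T (WithLp.toLp 2 x)‖ ^ 2 := (hT (WithLp.toLp 2 x)).symm
    _ ≤ (√L * ‖WithLp.toLp 2 x‖) ^ 2 := by gcongr; exact T.le_of_opNorm_le hop _
    _ = L * sqNorm x := by rw [mul_pow, Real.sq_sqrt hL, EuclideanSpace.real_norm_sq_eq, sqNorm]

lemma lintegral_exp_sqNorm_vecMul_le {y : ρ → ℝ} {s : ℝ} (hs : 0 ≤ s)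
    (hsy : s * sqNorm y ≤ 1 / 4) :
    ∫⁻ V, ENNReal.ofReal (Real.exp (s * sqNorm (y ᵥ* V))) ∂gaussianMatrix ρ ι
      ≤ ENNReal.ofReal (Real.exp (2 * s * (Fintype.card ι * sqNorm y))) := by
  classical
  let Y : ρ → Unit → ℝ := fun l _ => y l
  have hY : Y ∈ boundedFactor ρ Unit (sqNorm y) := fun x => by
    simpa [sqNorm, vecMul, mul_comm] using sq_dotProduct_le x y
  have htensor : ∀ V : ρ → ι → ℝ, sqNorm ((1 : Matrix (ι × Unit) (ι × Unit) ℝ) *ᵥ tensorSum V Y)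
      = sqNorm (y ᵥ* V) := fun V => by
    simp [sqNorm, Fintype.sum_prod_type, tensorSum, vecMul, dotProduct, Y, mul_comm]
  have hsplit : ∑ l, sqNorm (splitQuery (1 : Matrix (ι × Unit) (ι × Unit) ℝ) *ᵥ Y l)
      ≤ Fintype.card ι * sqNorm y := by
    rw [sqNorm, Finset.mul_sum]
    refine Finset.sum_le_sum fun l _ => ?_
    simpa [sqNorm, Y] using sqNorm_splitQuery_mulVec_le
      (q := (1 : Matrix (ι × Unit) (ι × Unit) ℝ)) (by simp) (Y l)
  have hmoment := lintegral_exp_sqNorm_mulVec_tensorSum_le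
    (q := (1 : Matrix (ι × Unit) (ι × Unit) ℝ)) (by simp) (by rwa [abs_of_nonneg hs]) hY
  simp only [htensor, chiSqBound_of_nonneg hs] at hmoment
  refine hmoment.trans ?_
  gcongr

theorem gaussianMatrix_compl_boundedFactor_le (h : 2 * Fintype.card ρ ≤ Fintype.card ι) :
    gaussianMatrix ρ ι (boundedFactor ρ ι (32 * Fintype.card ι))ᶜ
      ≤ ENNReal.ofReal (Real.exp (-(Fintype.card ι / 2))) := by
  obtain ⟨s, hcard, hball, hnet⟩ := exists_finset_isCover_closedBall (E := EuclideanSpace ℝ ρ)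
  set n : ℝ := (Fintype.card ι : ℝ)
  have hsub : (boundedFactor ρ ι (32 * n))ᶜ
      ⊆ ⋃ y ∈ s, {V : ρ → ι → ℝ | 2 * n ≤ 1 / 16 * sqNorm (y.ofLp ᵥ* V)} := by
    refine fun V hV => by_contra fun hcon => hV (mem_boundedFactor_of_isCover hnet fun y hy => ?_)
    simp only [Set.mem_iUnion, Set.mem_ofPred_eq, not_exists, not_le] at hcon
    linarith [hcon y hy]
  have htail : ∀ y ∈ s, gaussianMatrix ρ ι {V | 2 * n ≤ 1 / 16 * sqNorm (y.ofLp ᵥ* V)}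
      ≤ ENNReal.ofReal (Real.exp (-(3 * n / 2))) := fun y hy => by
    have hy4 : sqNorm y.ofLp ≤ 4 := by
      have hnorm : ‖y‖ ≤ 2 := by simpa using hball hy
      rw [sqNorm, ← EuclideanSpace.real_norm_sq_eq]
      nlinarith [norm_nonneg y]
    have hmeas : Measurable fun V : ρ → ι → ℝ => 1 / 16 * sqNorm (y.ofLp ᵥ* V) := by
      unfold sqNorm vecMul dotProduct
      fun_prop
    refine (measure_ge_le_exp_of_lintegral_exp_le hmeas
      (lintegral_exp_sqNorm_vecMul_le (by norm_num) (by linarith)) _).trans ?_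
    gcongr
    nlinarith [mul_le_mul_of_nonneg_left hy4 (Nat.cast_nonneg (α := ℝ) (Fintype.card ι))]
  have hnet_card : (s.card : ℝ) ≤ Real.exp n := by
    have hfive : (5 : ℝ) ≤ Real.exp 2 := by
      rw [← one_add_one_eq_two, Real.exp_add]
      nlinarith [Real.exp_one_gt_d9]
    have hn : Fintype.card ρ * (2 : ℝ) ≤ (Fintype.card ι : ℝ) := by exact_mod_cast mul_comm 2 _ ▸ h
    calc (s.card : ℝ) ≤ 5 ^ Fintype.card ρ := by
          exact_mod_cast (finrank_euclideanSpace (𝕜 := ℝ) (ι := ρ)) ▸ hcard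
      _ ≤ Real.exp 2 ^ Fintype.card ρ := by gcongr
      _ ≤ Real.exp n := by rw [← Real.exp_nat_mul]; gcongr
  calc gaussianMatrix ρ ι (boundedFactor ρ ι (32 * n))ᶜ
      ≤ ∑ _y ∈ s, ENNReal.ofReal (Real.exp (-(3 * n / 2))) :=
        (measure_mono hsub).trans ((measure_biUnion_finset_le _ _).trans (Finset.sum_le_sum htail))
    _ = ENNReal.ofReal (s.card * Real.exp (-(3 * n / 2))) := by simp [ENNReal.ofReal_mul]
    _ ≤ ENNReal.ofReal (Real.exp n * Real.exp (-(3 * n / 2))) := by gcongr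
    _ = ENNReal.ofReal (Real.exp (-(n / 2))) := by rw [← Real.exp_add]; ring_nf

end BoundedFactor

/-! ### The conditioned prior -/

section ProdCond

variable {X Θ : Type*} [MeasurableSpace X] [MeasurableSpace Θ]

lemma prod_le_prod_cond_add (γ : Measure X) [IsProbabilityMeasure γ] (π : Measure Θ)
    [IsProbabilityMeasure π] {T : Set Θ} (hT : MeasurableSet T) (E : Set (X × Θ)) :
    γ.prod π E ≤ γ.prod π[|T] E + π Tᶜ := by
  have hle : (γ.prod π).restrict (Set.univ ×ˢ T) ≤ γ.prod π[|T] := by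
    rw [← Measure.prod_restrict, Measure.restrict_univ, ProbabilityTheory.cond,
      Measure.prod_smul_right]
    exact fun S => by
      simpa using mul_le_mul_left (ENNReal.one_le_inv.2 (prob_le_one (μ := π) (s := T))) _
  calc γ.prod π E ≤ γ.prod π (E ∩ Set.univ ×ˢ T) + γ.prod π (Set.univ ×ˢ Tᶜ) := by
        refine (measure_mono fun p hp => ?_).trans (measure_union_le _ _)
        by_cases h : p.2 ∈ T <;> simp [hp, h]
    _ ≤ γ.prod π[|T] E + π Tᶜ := by
        rw [← Measure.restrict_apply' (MeasurableSet.univ.prod hT), Measure.prod_prod,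
          measure_univ, one_mul]
        gcongr

end ProdCond

section Typical

variable {ρ ι κ : Type*} [Fintype ρ] [Fintype ι] [Fintype κ]

/-- The law of two independent Gaussian matrices, the factors of the plant. -/
def factorLaw (ρ ι : Type*) [Fintype ρ] [Fintype ι] : Measure ((ρ → ι → ℝ) × (ρ → ι → ℝ)) :=
  (gaussianMatrix ρ ι).prod (gaussianMatrix ρ ι)

instance : IsProbabilityMeasure (factorLaw ρ ι) :=
  inferInstanceAs (IsProbabilityMeasure (Measure.prod _ _))

/-- The factors for which the second one has a bounded operator norm and the plant is long. The
lower bound is proved for the law of the factors conditioned on this event. -/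
def typicalFactors (ρ ι : Type*) [Fintype ρ] [Fintype ι] : Set ((ρ → ι → ℝ) × (ρ → ι → ℝ)) :=
  {θ | θ.2 ∈ boundedFactor ρ ι (32 * Fintype.card ι) ∧
    (Fintype.card ι : ℝ) ^ 2 * Fintype.card ρ / 8 < sqNorm (tensorSum θ.1 θ.2)}

lemma measurableSet_typicalFactors : MeasurableSet (typicalFactors ρ ι) :=
  (measurable_snd (measurableSet_boundedFactor _)).inter
    (measurableSet_lt measurable_const
      (measurable_sqNorm.comp (measurable_tensorSum measurable_fst measurable_snd)))

lemma setLIntegral_exp_factorLaw_le {q : Matrix κ (ι × ι) ℝ}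
    (hq : ∀ x, sqNorm (q *ᵥ x) ≤ sqNorm x) {s : ℝ} (hs : |s| * (128 * Fintype.card ι) ≤ 1) :
    ∫⁻ θ in Set.univ ×ˢ boundedFactor ρ ι (32 * Fintype.card ι),
        ENNReal.ofReal (Real.exp (s * sqNorm (q *ᵥ tensorSum θ.1 θ.2))) ∂factorLaw ρ ι
      ≤ ENNReal.ofReal
          (Real.exp (Fintype.card ρ * (chiSqBound (chiSqBound s) * frobSq q))) := by
  rw [factorLaw, ← Measure.prod_restrict, Measure.restrict_univ,
    lintegral_prod_symm _ (by fun_prop)]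
  have : 0 ≤ |s| * Fintype.card ι := by positivity
  exact setLIntegral_exp_sqNorm_mulVec_tensorSum_le hq (by linarith) (by linarith)

lemma factorLaw_sqNorm_tensorSum_le [Nonempty ι] :
    factorLaw ρ ι ({θ | sqNorm (tensorSum θ.1 θ.2)
          ≤ (Fintype.card ι : ℝ) ^ 2 * Fintype.card ρ / 8}
        ∩ Set.univ ×ˢ boundedFactor ρ ι (32 * Fintype.card ι))
      ≤ ENNReal.ofReal (Real.exp (-(Fintype.card ι * Fintype.card ρ / 1024))) := by
  classical
  have hn : (0 : ℝ) < Fintype.card ι := by exact_mod_cast Fintype.card_pos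
  set n : ℝ := (Fintype.card ι : ℝ)
  set r : ℝ := (Fintype.card ρ : ℝ)
  set s : ℝ := -(1 / (128 * n))
  have hs : s ≤ 0 := neg_nonpos.2 (by positivity)
  have hmoment := setLIntegral_exp_factorLaw_le (ρ := ρ) (ι := ι)
    (q := (1 : Matrix (ι × ι) (ι × ι) ℝ)) (s := s) (by simp)
    (by rw [abs_of_nonpos hs, neg_neg]; exact div_mul_cancel₀ 1 (by positivity) |>.le)
  have hfrob : frobSq (1 : Matrix (ι × ι) (ι × ι) ℝ) = n ^ 2 := by
    simp [frobSq_eq_trace, n, sq]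
  simp only [one_mulVec, chiSqBound_of_nonpos hs,
    chiSqBound_of_nonpos (div_nonpos_of_nonpos_of_nonneg hs zero_le_two), hfrob] at hmoment
  rw [← Measure.restrict_apply' (MeasurableSet.univ.prod (measurableSet_boundedFactor _))]
  calc _ ≤ (factorLaw ρ ι).restrict (Set.univ ×ˢ boundedFactor ρ ι (32 * n))
        {θ | -(n * r / 1024) ≤ s * sqNorm (tensorSum θ.1 θ.2)} := by
        refine measure_mono fun θ hθ => ?_
        calc -(n * r / 1024) = s * (n ^ 2 * r / 8) := by simp only [s]; field_simp; ring
          _ ≤ s * sqNorm (tensorSum θ.1 θ.2) := mul_le_mul_of_nonpos_left hθ hs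
    _ ≤ _ := measure_ge_le_exp_of_lintegral_exp_le (by fun_prop) hmoment _
    _ = _ := by
        congr 2
        simp only [s]
        field_simp
        ring

lemma factorLaw_compl_typicalFactors_le [Nonempty ρ] (hι : 8192 ≤ Fintype.card ι)
    (hρ : 2 * Fintype.card ρ ≤ Fintype.card ι) :
    factorLaw ρ ι (typicalFactors ρ ι)ᶜ ≤ 2 / 5 := by
  have : Nonempty ι := Fintype.card_pos_iff.1 (by omega)
  have hexp : ∀ x : ℝ, 8 ≤ x → ENNReal.ofReal (Real.exp (-x)) ≤ 5⁻¹ := fun x hx => by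
    rw [← ENNReal.ofReal_ofNat, ← ENNReal.ofReal_inv_of_pos (by norm_num), Real.exp_neg]
    gcongr
    linarith [Real.add_one_le_exp x]
  have hn : (8192 : ℝ) ≤ Fintype.card ι := by exact_mod_cast hι
  have hr : (1 : ℝ) ≤ Fintype.card ρ := by exact_mod_cast Fintype.card_pos (α := ρ)
  have hbounded : factorLaw ρ ι (Set.univ ×ˢ (boundedFactor ρ ι (32 * Fintype.card ι))ᶜ)
      ≤ 5⁻¹ := by
    rw [factorLaw, Measure.prod_prod, measure_univ, one_mul]
    exact (gaussianMatrix_compl_boundedFactor_le hρ).trans (hexp _ (by linarith))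
  have hlong := (factorLaw_sqNorm_tensorSum_le (ρ := ρ) (ι := ι)).trans (hexp _ (by nlinarith))
  calc factorLaw ρ ι (typicalFactors ρ ι)ᶜ
      ≤ factorLaw ρ ι (Set.univ ×ˢ (boundedFactor ρ ι (32 * Fintype.card ι))ᶜ)
        + factorLaw ρ ι ({θ | sqNorm (tensorSum θ.1 θ.2)
            ≤ (Fintype.card ι : ℝ) ^ 2 * Fintype.card ρ / 8}
          ∩ Set.univ ×ˢ boundedFactor ρ ι (32 * Fintype.card ι)) := by
        refine (measure_mono fun θ hθ => ?_).trans (measure_union_le _ _)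
        by_cases h : θ.2 ∈ boundedFactor ρ ι (32 * Fintype.card ι)
        · exact Or.inr ⟨not_lt.1 fun hlt => hθ ⟨h, hlt⟩, trivial, h⟩
        · exact Or.inl ⟨trivial, h⟩
    _ ≤ 5⁻¹ + 5⁻¹ := add_le_add hbounded hlong
    _ = 2 / 5 := by rw [← two_mul, div_eq_mul_inv]

lemma half_le_factorLaw_typicalFactors [Nonempty ρ] (hι : 8192 ≤ Fintype.card ι)
    (hρ : 2 * Fintype.card ρ ≤ Fintype.card ι) :
    2⁻¹ ≤ factorLaw ρ ι (typicalFactors ρ ι) := by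
  have hhalf : (2 / 5 : ℝ≥0∞) ≤ 2⁻¹ := by
    rw [← ENNReal.toReal_le_toReal (by finiteness) (by finiteness)]
    norm_num
  refine ENNReal.le_of_add_le_add_right (a := 2⁻¹) (by finiteness) ?_
  rw [ENNReal.inv_two_add_inv_two, 
    ← prob_add_prob_compl (μ := factorLaw ρ ι) measurableSet_typicalFactors]
  gcongr
  exact (factorLaw_compl_typicalFactors_le hι hρ).trans hhalf

lemma half_le_prod_cond_typicalFactors [Nonempty ρ] (hι : 8192 ≤ Fintype.card ι)
    (hρ : 2 * Fintype.card ρ ≤ Fintype.card ι) {X : Type*} [MeasurableSpace X] (γ : Measure X)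
    [IsProbabilityMeasure γ] {E : Set (X × ((ρ → ι → ℝ) × (ρ → ι → ℝ)))}
    (hE : 9 / 10 ≤ γ.prod (factorLaw ρ ι) E) :
    2⁻¹ ≤ γ.prod (factorLaw ρ ι)[|typicalFactors ρ ι] E := by
  have hsplit : (9 / 10 : ℝ≥0∞) = 2⁻¹ + 2 / 5 := by
    rw [← ENNReal.toReal_eq_toReal_iff' (by finiteness) (by finiteness),
      ENNReal.toReal_add (by finiteness) (by finiteness)]
    norm_num
  refine ENNReal.le_of_add_le_add_right (a := 2 / 5) (by finiteness) ?_
  rw [← hsplit]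
  exact hE.trans <| (prod_le_prod_cond_add γ _ measurableSet_typicalFactors E).trans <|
    add_le_add_right (factorLaw_compl_typicalFactors_le hι hρ) _

lemma lintegral_exp_cond_typicalFactors_le
    (hT : 2⁻¹ ≤ factorLaw ρ ι (typicalFactors ρ ι)) {q : Matrix κ (ι × ι) ℝ}
    (hq : ∀ x, sqNorm (q *ᵥ x) ≤ sqNorm x) :
    ∫⁻ θ, ENNReal.ofReal (Real.exp (1 / (128 * Fintype.card ι)
        * sqNorm (q *ᵥ tensorSum θ.1 θ.2))) ∂(factorLaw ρ ι)[|typicalFactors ρ ι]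
      ≤ ENNReal.ofReal (Real.exp (Fintype.card ρ * frobSq q / (32 * Fintype.card ι)
          + Real.log 2)) := by
  set s : ℝ := 1 / (128 * Fintype.card ι)
  have hs : 0 ≤ s := by positivity
  have hinv : (factorLaw ρ ι (typicalFactors ρ ι))⁻¹ ≤ ENNReal.ofReal 2 := by
    rw [ENNReal.ofReal_ofNat]
    exact ENNReal.inv_le_iff_inv_le.2 hT
  rw [ProbabilityTheory.cond, lintegral_smul_measure, smul_eq_mul, Real.exp_add,
    Real.exp_log zero_lt_two, mul_comm (Real.exp _), ENNReal.ofReal_mul zero_le_two]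
  have hsub : typicalFactors ρ ι ⊆ Set.univ ×ˢ boundedFactor ρ ι (32 * Fintype.card ι) :=
    fun θ hθ => ⟨trivial, hθ.1⟩
  refine mul_le_mul' hinv ((lintegral_mono_set hsub).trans <|
    (setLIntegral_exp_factorLaw_le hq ?_).trans_eq ?_)
  · rw [abs_of_nonneg hs]
    simpa only [s, one_div] using inv_mul_le_one
  · rw [chiSqBound_of_nonneg hs, chiSqBound_of_nonneg (by positivity)]
    congr 2
    simp only [s]
    ring

end Typical

/-! ### Estimation -/

section NormalizedRow

variable {ι : Type*} [Fintype ι]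

/-- The unit row vector in the direction of `o`, which is the query that an estimator with output
`o` would make next. It vanishes if `o` does. -/
def normalizedRow (o : ι → ℝ) : Matrix Unit ι ℝ := of fun _ i => o i / √(sqNorm o)

lemma sqNorm_normalizedRow_mulVec (o x : ι → ℝ) :
    sqNorm (normalizedRow o *ᵥ x) = (o ⬝ᵥ x) ^ 2 / sqNorm o := by
  have hentry : (normalizedRow o *ᵥ x) () = (o ⬝ᵥ x) / √(sqNorm o) := by
    simp only [normalizedRow, mulVec, dotProduct, of_apply, div_mul_eq_mul_div, Finset.sum_div]
  rw [sqNorm, Fintype.sum_unique, PUnit.default_eq_unit, hentry, div_pow,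
    Real.sq_sqrt (sqNorm_nonneg o)]

lemma frobSq_normalizedRow_le_one (o : ι → ℝ) : frobSq (normalizedRow o) ≤ 1 := by
  simp only [frobSq, normalizedRow, of_apply, div_pow, ← Finset.sum_div, Finset.univ_unique,
    Finset.sum_singleton]
  rw [Real.sq_sqrt (sqNorm_nonneg o)]
  exact div_self_le_one _

lemma le_sqNorm_normalizedRow_mulVec {o x : ι → ℝ} {D : ℝ} (hx : 2 * D ≤ sqNorm x)
    (ho : sqNorm (o - x) ≤ D) : D ≤ sqNorm (normalizedRow o *ᵥ x) := by
  have hcs := sq_dotProduct_le o x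
  have hexpand : sqNorm (o - x) = sqNorm o - 2 * (o ⬝ᵥ x) + sqNorm x := by
    simp only [sqNorm_eq_dotProduct, sub_dotProduct, dotProduct_sub, dotProduct_comm x o]
    ring
  rcases (sqNorm_nonneg o).eq_or_lt with h0 | hpos
  · have hdot : o ⬝ᵥ x = 0 := sq_nonpos_iff _ |>.1 (by rwa [← h0, zero_mul] at hcs)
    rw [hexpand, hdot, ← h0] at ho
    exact le_trans (by linarith) (sqNorm_nonneg _)
  rw [sqNorm_normalizedRow_mulVec, le_div_iff₀ hpos]
  nlinarith [sq_nonneg (sqNorm o - o ⬝ᵥ x), mul_le_mul_of_nonneg_right ho hpos.le]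

end NormalizedRow

namespace QueryMaps

variable {N k t : ℕ} {Θ : Type*} [MeasurableSpace Θ]

lemma Valid.map_snd_jointLaw {Q : QueryMaps N k t} (hQ : Q.Valid) {π : Measure Θ} [SFinite π]
    {a : Θ → Fin N → ℝ} (ha : Measurable a) : (Q.jointLaw π a).map Prod.snd = π := by
  rw [jointLaw, Measure.map_map measurable_snd (hQ.measurable_resp_add ha)]
  exact (measurePreserving_snd (μ := 𝒩 (Fin N)) (ν := π)).map_eq

/-- An accurate estimate of a long signal shows that the direction of the output is a query that
captures a constant fraction of the signal, and the transcript has to pay for it. -/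
theorem Valid.ofReal_mul_jointLaw_le {Q : QueryMaps N k t} (hQ : Q.Valid) {π : Measure Θ}
    [IsProbabilityMeasure π] {P : Θ → Fin N → ℝ} (hP : Measurable P) {β s D B B' : ℝ}
    (hβ : β ≠ 0) (hs : 0 < s) (hB : 0 ≤ B) (hB' : 0 ≤ B') (hlong : ∀ᵐ θ ∂π, 2 * D ≤ sqNorm (P θ))
    (hround : ∀ q : Matrix (Fin k) (Fin N) ℝ, q * qᵀ = 1 →
      ∫⁻ θ, ENNReal.ofReal (Real.exp (s * sqNorm (q *ᵥ P θ))) ∂π ≤ ENNReal.ofReal (Real.exp B))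
    (hrow : ∀ q : Matrix Unit (Fin N) ℝ, frobSq q ≤ 1 →
      ∫⁻ θ, ENNReal.ofReal (Real.exp (s * sqNorm (q *ᵥ P θ))) ∂π ≤ ENNReal.ofReal (Real.exp B'))
    {o : Transcript k t → Fin N → ℝ} (ho : Measurable o) :
    ENNReal.ofReal (s * D) * Q.jointLaw π (β • P) {p | sqNorm (o p.1 - P p.2) ≤ D}
      ≤ ENNReal.ofReal (((1 + β ^ 2 / s) ^ t - 1) * B) + ENNReal.ofReal B' := by
  have ha : Measurable (β • P) := hP.const_smul β
  set J := Q.jointLaw π (β • P)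
  have hF : Measurable fun p : Transcript k t × Θ =>
      s * sqNorm (normalizedRow (o p.1) *ᵥ P p.2) := by
    simp only [sqNorm_normalizedRow_mulVec]
    fun_prop
  have hlongJ : ∀ᵐ p ∂J, 2 * D ≤ sqNorm (P p.2) := by
    rw [← hQ.map_snd_jointLaw (π := π) ha] at hlong
    exact ae_of_ae_map measurable_snd.aemeasurable hlong
  have henergy := hQ.lintegral_energy_jointLaw_le (π := π) ha (c := s / β ^ 2) (by positivity) hB
    fun q hq => by
      simpa [mulVec_smul, sqNorm_smul, ← mul_assoc, div_mul_cancel₀ s (pow_ne_zero 2 hβ)]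
        using hround q hq
  rw [inv_div] at henergy
  calc ENNReal.ofReal (s * D) * J {p | sqNorm (o p.1 - P p.2) ≤ D}
      ≤ ENNReal.ofReal (s * D) * J {p | ENNReal.ofReal (s * D)
          ≤ ENNReal.ofReal (s * sqNorm (normalizedRow (o p.1) *ᵥ P p.2))} := by
        refine mul_le_mul' le_rfl (measure_mono_ae (hlongJ.mono fun p hp hclose => ?_))
        exact ENNReal.ofReal_le_ofReal (mul_le_mul_of_nonneg_left
          (le_sqNorm_normalizedRow_mulVec hp hclose) hs.le)
    _ ≤ ∫⁻ p, ENNReal.ofReal (s * sqNorm (normalizedRow (o p.1) *ᵥ P p.2)) ∂J :=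
        mul_meas_ge_le_lintegral hF.ennreal_ofReal _
    _ ≤ ∫⁻ p, ENNReal.ofReal (Q.energy ((β • P) p.2) p.1) ∂J + ENNReal.ofReal B' :=
        hQ.lintegral_jointLaw_le ha hF (fun _ => mul_nonneg hs.le (sqNorm_nonneg _)) hB'
          fun h => hrow (normalizedRow (o h)) (frobSq_normalizedRow_le_one (o h))
    _ ≤ _ := by gcongr

end QueryMaps

/-! ### Plants as vectors -/

section VecPlant

variable {n r : ℕ} {κ : Type*} [Fintype κ]

/-- The plant with factors `θ.1` and `θ.2`, flattened to a vector as the algorithm sees it. -/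
def vecPlant (θ : (Fin r → Fin n → ℝ) × (Fin r → Fin n → ℝ)) : Fin (n * n) → ℝ :=
  _root_.vec n (plant θ.1 θ.2)

lemma vecPlant_eq (θ : (Fin r → Fin n → ℝ) × (Fin r → Fin n → ℝ)) :
    vecPlant θ = tensorSum θ.1 θ.2 ∘ finProdFinEquiv.symm := rfl

@[fun_prop]
lemma measurable_vecPlant : Measurable (vecPlant (n := n) (r := r)) := by
  have htensor : Measurable fun θ : (Fin r → Fin n → ℝ) × (Fin r → Fin n → ℝ) =>
      tensorSum θ.1 θ.2 := by fun_prop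
  exact measurable_pi_lambda _ fun i => (measurable_pi_apply (finProdFinEquiv.symm i)).comp htensor

lemma sqNorm_comp_equiv {ι ι' : Type*} [Fintype ι] [Fintype ι'] (x : ι → ℝ) (e : ι' ≃ ι) :
    sqNorm (x ∘ e) = sqNorm x :=
  e.sum_comp fun i => x i ^ 2

lemma frobSq_submatrix_equiv {ι ι' : Type*} [Fintype ι] [Fintype ι'] (A : Matrix κ ι ℝ)
    (e : ι' ≃ ι) : frobSq (A.submatrix id e) = frobSq A :=
  Finset.sum_congr rfl fun k _ => sqNorm_comp_equiv (A k) e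

lemma frobSq_eq_sqNorm_vec (A : Matrix (Fin n) (Fin n) ℝ) : frobSq A = sqNorm (_root_.vec n A) :=
  (Fintype.sum_prod_type fun p : Fin n × Fin n => A p.1 p.2 ^ 2).symm.trans
    (finProdFinEquiv.symm.sum_comp _).symm

instance : IsProbabilityMeasure (stdGaussianMat n) :=
  inferInstanceAs (IsProbabilityMeasure (gaussianMatrix (Fin n) (Fin n)))

lemma measurePreserving_vec :
    MeasurePreserving (fun G => _root_.vec n (of G)) (stdGaussianMat n) (𝒩 (Fin (n * n))) := by
  have huncurry : MeasurePreserving (fun (G : Fin n → Fin n → ℝ) p => G p.1 p.2)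
      (stdGaussianMat n) (𝒩 (Fin n × Fin n)) := ⟨by fun_prop, map_uncurry_gaussianMatrix⟩
  exact (measurePreserving_arrowCongr' (fun _ => gaussianReal 0 1) (fun _ => gaussianReal 0 1)
    finProdFinEquiv (MeasurableEquiv.refl ℝ) fun _ => MeasurePreserving.id _).comp huncurry

lemma lintegral_exp_vecPlant_le (hT : 2⁻¹ ≤ factorLaw (Fin r) (Fin n) (typicalFactors _ _))
    {q : Matrix κ (Fin (n * n)) ℝ} (hq : ∀ x, sqNorm (q *ᵥ x) ≤ sqNorm x) :
    ∫⁻ θ, ENNReal.ofReal (Real.exp (1 / (128 * n) * sqNorm (q *ᵥ vecPlant θ)))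
        ∂(factorLaw (Fin r) (Fin n))[|typicalFactors _ _]
      ≤ ENNReal.ofReal (Real.exp (r * frobSq q / (32 * n) + Real.log 2)) := by
  have hreindex : ∀ x : Fin n × Fin n → ℝ,
      q.submatrix id finProdFinEquiv *ᵥ x = q *ᵥ (x ∘ finProdFinEquiv.symm) := fun x =>
    submatrix_mulVec_equiv q x id finProdFinEquiv
  have h := lintegral_exp_cond_typicalFactors_le hT (q := q.submatrix id finProdFinEquiv)
    fun x => by simpa only [hreindex, sqNorm_comp_equiv] using hq (x ∘ finProdFinEquiv.symm)
  simpa only [hreindex, ← vecPlant_eq, frobSq_submatrix_equiv, Fintype.card_fin] using h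

lemma ae_le_sqNorm_vecPlant : ∀ᵐ θ ∂(factorLaw (Fin r) (Fin n))[|typicalFactors _ _],
    (n : ℝ) ^ 2 * r / 8 ≤ sqNorm (vecPlant θ) := by
  filter_upwards [ae_cond_mem measurableSet_typicalFactors] with θ hθ
  simpa only [vecPlant_eq, sqNorm_comp_equiv, Fintype.card_fin] using hθ.2.le

end VecPlant

/-! ### The lower bound -/

lemma sq_le_of_le_energy_add {n r k Y : ℝ} (hn : 8192 ≤ n) (hr : 1 ≤ r) (hrn : 2 * r ≤ n)
    (hk : n ≤ r * k) (hY : 0 ≤ Y) (h : n * r / 4096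
      ≤ Y * (r * k / (32 * n) + Real.log 2) + (r * 1 / (32 * n) + Real.log 2)) :
    n ^ 2 ≤ 8192 * Y * k := by
  have hn0 : 0 < n := by linarith
  have hlog2 : Real.log 2 ≤ 31 / 32 := by linarith [Real.log_two_lt_d9]
  have hrow : r * 1 / (32 * n) + Real.log 2 ≤ 1 := by
    have : r * 1 / (32 * n) ≤ 1 / 32 := by
      rw [div_le_iff₀ (by positivity)]
      linarith
    linarith
  have hround : r * k / (32 * n) + Real.log 2 ≤ r * k / n := by
    have hone : 1 ≤ r * k / n := (one_le_div hn0).2 hk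
    have hscale : r * k / (32 * n) = r * k / n / 32 := by field_simp
    linarith
  have hmain : n * r / 8192 ≤ Y * (r * k / n) := by
    have hlarge : 8192 * 1 ≤ n * r := by gcongr
    linarith [mul_le_mul_of_nonneg_left hround hY]
  rw [mul_div_assoc', le_div_iff₀ hn0] at hmain
  refine le_of_mul_le_mul_right (a := r) ?_ (by linarith)
  linarith

section Algorithms

variable {n r k t : ℕ} {α : ℝ}

lemma growth_sub_one_nonneg : 0 ≤ (1 + 128 * α ^ 2) ^ t - 1 :=
  sub_nonneg.2 (one_le_pow₀ (le_add_of_nonneg_right (by positivity)))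

namespace QueryMaps

lemma Valid.ofReal_mul_jointLaw_vecPlant_le {Q : QueryMaps (n * n) k t} (hQ : Q.Valid)
    (hn : n ≠ 0) (hT : 2⁻¹ ≤ factorLaw (Fin r) (Fin n) (typicalFactors _ _)) (hα : α ≠ 0)
    {o : Transcript k t → Fin (n * n) → ℝ} (ho : Measurable o) :
    ENNReal.ofReal (n * r / 2048) *
        Q.jointLaw (factorLaw (Fin r) (Fin n))[|typicalFactors _ _] ((α / √n) • vecPlant)
          {p | sqNorm (o p.1 - vecPlant p.2) ≤ 1 / 16 * (n : ℝ) ^ 2 * r}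
      ≤ ENNReal.ofReal (((1 + 128 * α ^ 2) ^ t - 1) * (r * k / (32 * n) + Real.log 2)
          + (r * 1 / (32 * n) + Real.log 2)) := by
  have hn0 : (0 : ℝ) < n := by positivity
  have hgrowth : (α / √n) ^ 2 / (1 / (128 * n)) = 128 * α ^ 2 := by
    rw [div_pow, Real.sq_sqrt hn0.le]
    field_simp
  have hcaptured : 1 / (128 * n) * (1 / 16 * (n : ℝ) ^ 2 * r) = n * r / 2048 := by
    field_simp
    ring
  have := cond_isProbabilityMeasure (μ := factorLaw (Fin r) (Fin n))
    (s := typicalFactors (Fin r) (Fin n)) fun h => by simp [h] at hT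
  rw [ENNReal.ofReal_add (mul_nonneg growth_sub_one_nonneg (by positivity)) (by positivity),
    ← hgrowth, ← hcaptured]
  exact hQ.ofReal_mul_jointLaw_le measurable_vecPlant (by positivity) (by positivity)
    (by positivity) (by positivity)
    (ae_le_sqNorm_vecPlant.mono fun θ hθ => by linarith)
    (fun q hq => by
      simpa [frobSq_of_mul_transpose_self hq] using
        lintegral_exp_vecPlant_le hT (sqNorm_mulVec_le_of_mul_transpose_self hq))
    (fun q hq => (lintegral_exp_vecPlant_le hT fun x => (sqNorm_mulVec_le q x).trans
      (mul_le_of_le_one_left (sqNorm_nonneg x) hq)).trans (by gcongr)) ho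

lemma Valid.sq_le_of_accurate [NeZero r] {Q : QueryMaps (n * n) k t} (hQ : Q.Valid)
    (hn : 8192 ≤ n) (hr : 2 * r ≤ n) (hk : n ≤ r * k) (hα : α ≠ 0)
    {o : Transcript k t → Fin (n * n) → ℝ} (ho : Measurable o)
    (hE : 9 / 10 ≤ (𝒩 (Fin (n * n))).prod (factorLaw (Fin r) (Fin n))
      {p | sqNorm (o (Q.resp (p.1 + (α / √n) • vecPlant p.2)) - vecPlant p.2)
        ≤ 1 / 16 * (n : ℝ) ^ 2 * r}) :
    (n : ℝ) ^ 2 ≤ 8192 * ((1 + 128 * α ^ 2) ^ t - 1) * k := by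
  have hcard : 8192 ≤ Fintype.card (Fin n) := by simpa using hn
  have hrank : 2 * Fintype.card (Fin r) ≤ Fintype.card (Fin n) := by simpa using hr
  have haccurate : 2⁻¹ ≤ Q.jointLaw (factorLaw (Fin r) (Fin n))[|typicalFactors _ _]
      ((α / √n) • vecPlant)
      {p | sqNorm (o p.1 - vecPlant p.2) ≤ 1 / 16 * (n : ℝ) ^ 2 * r} := by
    rw [jointLaw, Measure.map_apply (hQ.measurable_resp_add (measurable_vecPlant.const_smul _))
      (measurableSet_le (by fun_prop) measurable_const)]
    exact half_le_prod_cond_typicalFactors hcard hrank _ hE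
  have henergy := (mul_le_mul' le_rfl haccurate).trans <| hQ.ofReal_mul_jointLaw_vecPlant_le
    (by omega) (half_le_factorLaw_typicalFactors hcard hrank) hα ho
  have hY : 0 ≤ (1 + 128 * α ^ 2) ^ t - 1 := growth_sub_one_nonneg
  rw [← ENNReal.ofReal_ofNat, ← ENNReal.ofReal_inv_of_pos (by norm_num),
    ← ENNReal.ofReal_mul (by positivity), ENNReal.ofReal_le_ofReal_iff (by positivity)] at henergy
  exact sq_le_of_le_energy_add (by exact_mod_cast hn) (Nat.one_le_cast.2 (NeZero.pos r))
    (by exact_mod_cast hr) (by exact_mod_cast hk) hY (by linarith)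

end QueryMaps

end Algorithms

lemma exists_le_measure_of_le_prod {X Ω : Type*} [MeasurableSpace X] [MeasurableSpace Ω]
    {ν : Measure X} [IsFiniteMeasure ν] {μ : Measure Ω} [IsProbabilityMeasure μ] {S : Set (X × Ω)}
    (hS : MeasurableSet S) {c : ℝ≥0∞} (hc : c ≤ ν.prod μ S) :
    ∃ ω, c ≤ ν {x | (x, ω) ∈ S} := by
  have hfin : ν.prod μ S ≠ ∞ := measure_ne_top _ _
  rw [Measure.prod_apply_symm hS] at hc hfin
  obtain ⟨ω, hω⟩ := exists_lintegral_le hfin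
  exact ⟨ω, hc.trans hω⟩

lemma log_div_log_le_of_sq_le {n k α : ℝ} {t : ℕ} (hn : n ≠ 0) (hk : 0 ≤ k) (hα : 2 ≤ α)
    (h : n ^ 2 ≤ 8192 * ((1 + 128 * α ^ 2) ^ t - 1) * k) :
    Real.log (n ^ 2 / k) / Real.log α ≤ 23 * t := by
  have hk0 : 0 < k := hk.lt_of_ne <| by
    rintro rfl
    rw [mul_zero] at h
    exact h.not_gt (by positivity)
  have ht : t ≠ 0 := by
    rintro rfl
    rw [pow_zero, sub_self, mul_zero, zero_mul] at h
    exact h.not_gt (by positivity)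
  have hbase : 1 + 128 * α ^ 2 ≤ α ^ 10 := by
    have h8 : (2 : ℝ) ^ 8 ≤ α ^ 8 := by gcongr
    have h2 : (2 : ℝ) ^ 2 ≤ α ^ 2 := by gcongr
    rw [pow_add α 8 2]
    nlinarith
  have hconst : 8192 ≤ α ^ (13 * t) := calc
    (8192 : ℝ) = 2 ^ 13 := by norm_num
    _ ≤ α ^ 13 := by gcongr
    _ ≤ α ^ (13 * t) := pow_le_pow_right₀ (by linarith) (by omega)
  have hpow : n ^ 2 / k ≤ α ^ (23 * t) := calc
    n ^ 2 / k ≤ 8192 * ((1 + 128 * α ^ 2) ^ t - 1) := (div_le_iff₀ hk0).2 h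
    _ ≤ 8192 * (1 + 128 * α ^ 2) ^ t := by linarith
    _ ≤ α ^ (13 * t) * (α ^ 10) ^ t := by gcongr
    _ = α ^ (23 * t) := by ring
  rw [div_le_iff₀ (Real.log_pos (by linarith))]
  calc Real.log (n ^ 2 / k) ≤ Real.log (α ^ (23 * t)) := Real.log_le_log (by positivity) hpow
    _ = 23 * t * Real.log α := by
        rw [Real.log_pow]
        push_cast
        ring

section Randomized

variable {n r k t : ℕ} {α : ℝ} {Ω : Type*} [MeasurableSpace Ω] {μ : Measure Ω}
  [IsProbabilityMeasure μ] {Qf : Ω → QueryMaps (n * n) k t}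
  {out : Ω → Transcript k t → Matrix (Fin n) (Fin n) ℝ}

lemma exists_accurate_seed
    (hQ : ∀ (j : Fin t) (i : Fin k) (l : Fin (n * n)),
      Measurable fun p : Ω × (Fin (j : ℕ) → Fin k → ℝ) => Qf p.1 j p.2 i l)
    (hout : ∀ i j : Fin n, Measurable fun p : Ω × Transcript k t => out p.1 p.2 i j)
    {β D : ℝ} {c : ℝ≥0∞}
    (hsucc : c ≤ (((stdGaussianMat n).prod (factorLaw (Fin r) (Fin n))).prod μ)
      {p | frobSq (out p.2 ((Qf p.2).resp
            (_root_.vec n (of p.1.1 + β • plant p.1.2.1 p.1.2.2)))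
          - plant p.1.2.1 p.1.2.2) ≤ D}) :
    ∃ ω, c ≤ (𝒩 (Fin (n * n))).prod (factorLaw (Fin r) (Fin n))
      {p | sqNorm (_root_.vec n (out ω ((Qf ω).resp (p.1 + β • vecPlant p.2))) - vecPlant p.2)
        ≤ D} := by
  have hresp : Measurable fun p : ((Fin (n * n) → ℝ) ×
      ((Fin r → Fin n → ℝ) × (Fin r → Fin n → ℝ))) × Ω =>
      (Qf p.2).resp (p.1.1 + β • vecPlant p.1.2) :=
    QueryMaps.measurable_resp (Q := Qf ∘ Prod.snd)
      (fun j i l => (hQ j i l).comp ((measurable_snd.comp measurable_fst).prodMk measurable_snd))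
      (by fun_prop)
  have herror : Measurable fun p : ((Fin (n * n) → ℝ) ×
      ((Fin r → Fin n → ℝ) × (Fin r → Fin n → ℝ))) × Ω =>
      sqNorm (_root_.vec n (out p.2 ((Qf p.2).resp (p.1.1 + β • vecPlant p.1.2)))
        - vecPlant p.1.2) := by
    refine measurable_sqNorm.comp
      (Measurable.sub (measurable_pi_lambda _ fun i => ?_) (by fun_prop))
    exact (hout _ _).comp (measurable_snd.prodMk hresp)
  have hvec := ((measurePreserving_vec (n := n)).prod
    (MeasurePreserving.id (factorLaw (Fin r) (Fin n)))).prod (MeasurePreserving.id μ)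
  have hS := measurableSet_le herror (measurable_const (a := D))
  refine exists_le_measure_of_le_prod (μ := μ) hS (hsucc.trans_eq ?_)
  rw [← hvec.measure_preimage hS.nullMeasurableSet]
  simp only [frobSq_eq_sqNorm_vec]
  rfl

theorem rank_r_plant_estimation_lower_bound_general (hn : 8192 ≤ n) (hr : 2 * r ≤ n) (hα : 2 ≤ α)
    (hk : n ≤ r * k) (hvalid : ∀ ω, (Qf ω).Valid)
    (hQ : ∀ (j : Fin t) (i : Fin k) (l : Fin (n * n)),
      Measurable fun p : Ω × (Fin (j : ℕ) → Fin k → ℝ) => Qf p.1 j p.2 i l)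
    (hout : ∀ i j : Fin n, Measurable fun p : Ω × Transcript k t => out p.1 p.2 i j)
    (hsucc : 9 / 10 ≤ (((stdGaussianMat n).prod (factorLaw (Fin r) (Fin n))).prod μ)
      {p | frobSq (out p.2 ((Qf p.2).resp
            (_root_.vec n (of p.1.1 + (α / √n) • plant p.1.2.1 p.1.2.2)))
          - plant p.1.2.1 p.1.2.2) ≤ 1 / 16 * (n : ℝ) ^ 2 * r}) :
    Real.log ((n : ℝ) ^ 2 / k) / Real.log α ≤ 23 * t := by
  have : NeZero r := ⟨by rintro rfl; omega⟩
  obtain ⟨ω, hω⟩ := exists_accurate_seed hQ hout hsucc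
  have hvec : Measurable fun h => _root_.vec n (out ω h) :=
    measurable_pi_lambda _ fun _ => (hout _ _).comp measurable_prodMk_left
  exact log_div_log_le_of_sq_le (Nat.cast_ne_zero.2 (by omega)) k.cast_nonneg hα <|
    (hvalid ω).sq_le_of_accurate hn hr hk (by positivity) hvec hω

end Randomized

/-- Lower bound for estimating the rank-`r` plant with exact adaptive linear
measurements (Theorem 3.3 of the paper). -/
theorem rank_r_plant_estimation_lower_bound :
    ∃ (α₀ c c' : ℝ) (n₀ : ℕ), 1 ≤ α₀ ∧ 0 < c ∧ 0 < c' ∧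
      ∀ (n r k t : ℕ) (α : ℝ), n₀ ≤ n → 1 ≤ r → 2 * r ≤ n → α₀ ≤ α → n * r ≤ k →
      ∀ (Ω : Type) [MeasurableSpace Ω] (μ : Measure Ω) [IsProbabilityMeasure μ]
        (Qf : Ω → QueryMaps (n * n) k t)
        (out : Ω → (Fin t → Fin k → ℝ) → Matrix (Fin n) (Fin n) ℝ),
        (∀ ω, (Qf ω).Valid) →
        (∀ (j : Fin t) (i : Fin k) (l : Fin (n * n)),
            Measurable fun p : Ω × (Fin (j : ℕ) → Fin k → ℝ) => Qf p.1 j p.2 i l) →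
        (∀ i j : Fin n,
            Measurable fun p : Ω × (Fin t → Fin k → ℝ) => out p.1 p.2 i j) →
        (9 / 10 : ℝ≥0∞) ≤
          (((stdGaussianMat n).prod
                ((Measure.pi fun _ : Fin r => stdGaussian (Fin n)).prod
                  (Measure.pi fun _ : Fin r => stdGaussian (Fin n)))).prod μ)
            {p | frobSq
                  (out p.2 (QueryMaps.resp (Qf p.2)
                      (vec n (Matrix.of p.1.1 +
                        (α / Real.sqrt n) • plant p.1.2.1 p.1.2.2))) -
                    plant p.1.2.1 p.1.2.2)
                ≤ c * (n : ℝ) ^ 2 * r} →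
        c' * (Real.log ((n : ℝ) ^ 2 / k) /
            (Real.log α + Real.log (Real.log n))) ≤ (t : ℝ) := by
  refine ⟨2, 1 / 16, 1 / 23, 8192, by norm_num, by norm_num, by norm_num, ?_⟩
  intro n r k t α hn hr1 hr hα hk Ω _ μ _ Qf out hvalid hQ hout hsucc
  have hn' : (8192 : ℝ) ≤ n := by exact_mod_cast hn
  have hrounds := rank_r_plant_estimation_lower_bound_general hn hr hα
    ((Nat.le_mul_of_pos_right n hr1).trans (hk.trans (Nat.le_mul_of_pos_left k hr1))) hvalid hQ
    hout hsucc
  have hlogα : 0 < Real.log α := Real.log_pos (by linarith)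
  have hloglog : 0 ≤ Real.log (Real.log n) := Real.log_nonneg <| by
    rw [Real.le_log_iff_exp_le (by linarith)]
    linarith [Real.exp_one_lt_d9]
  rw [div_le_iff₀ hlogα] at hrounds
  rw [← mul_div_assoc, div_le_iff₀ (by positivity)]
  nlinarith [t.cast_nonneg (α := ℝ)]

end
end

section
/- Let P and Q be probability measures on a measurable space with P absolutely continuous with respect to Q, and let E be a measurable set with P(E) > 0. Let P̃ denote P conditioned on E, i.e. P̃(E') = P(E ∩ E')/P(E) for all measurable E'. Then D_KL(P̃ ‖ Q) ≤ (D_KL(P ‖ Q) + 2)/P(E). -/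
/-!
Put `p = P E`, and let `h` be the binary entropy. On `E` the density of `P[|E]` with respect to `Q`
is `p⁻¹` times that of `P`, and similarly on `Eᶜ`. Integrating the logarithms of these densities
gives the grouping identity
`p * D(P[|E] ‖ Q) + (1 - p) * D(P[|Eᶜ] ‖ Q) = D(P ‖ Q) + h p`.
The second term is nonnegative by Gibbs' inequality, so `p * D(P[|E] ‖ Q) ≤ D(P ‖ Q) + h p`, and
`h p ≤ log 2 < 2`.
-/

open MeasureTheory ProbabilityTheory Matrix
open scoped ENNReal Classical

noncomputable section

section Cond

variable {Ω F : Type*} {mΩ : MeasurableSpace Ω} {P : Measure Ω} {E : Set Ω}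
  [NormedAddCommGroup F]

lemma integrable_cond_of_integrableOn {f : Ω → F} (hf : IntegrableOn f E P) :
    Integrable f P[|E] := by
  simpa [ProbabilityTheory.cond] using hf.integrable.to_average

lemma measureReal_smul_integral_cond [NormedSpace ℝ F] (f : Ω → F) (hPE : P E ≠ ⊤) :
    P.real E • ∫ x, f x ∂P[|E] = ∫ x in E, f x ∂P := by
  rw [ProbabilityTheory.cond, ← setAverage_eq', measure_smul_setAverage f hPE]

end Cond

section LogLikelihoodRatio

variable {Ω : Type*} {mΩ : MeasurableSpace Ω} {P Q : Measure Ω} {E : Set Ω}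

lemma llr_restrict_ae_eq [SFinite P] [SigmaFinite Q] (hPQ : P ≪ Q) (hE : MeasurableSet E) :
    llr (P.restrict E) Q =ᵐ[P.restrict E] llr P Q := by
  have hPEQ : P.restrict E ≪ Q := Measure.restrict_le_self.absolutelyContinuous.trans hPQ
  filter_upwards [hPEQ.ae_le (Measure.rnDeriv_restrict P Q hE), ae_restrict_mem hE] with x hx hxE
  simp only [llr_def, hx, Set.indicator_of_mem hxE]

lemma llr_cond_ae_eq [IsFiniteMeasure P] [SigmaFinite Q] (hPQ : P ≪ Q) (hE : MeasurableSet E) :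
    llr P[|E] Q =ᵐ[P.restrict E] fun x ↦ llr P Q x - Real.log (P.real E) := by
  obtain hPE | hPE := eq_or_ne (P E) 0
  · simp [Measure.restrict_eq_zero.2 hPE, Filter.EventuallyEq]
  have hPEQ : P.restrict E ≪ Q := Measure.restrict_le_self.absolutelyContinuous.trans hPQ
  filter_upwards [llr_restrict_ae_eq hPQ hE, llr_smul_left hPEQ _
    (ENNReal.inv_ne_zero.2 (measure_ne_top P E)) (ENNReal.inv_ne_top.2 hPE)] with x hrestrict hsmul
  rw [ProbabilityTheory.cond, hsmul, hrestrict, ENNReal.toReal_inv, Real.log_inv, ← sub_eq_add_neg,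
    measureReal_def]

lemma integrable_llr_cond [IsFiniteMeasure P] [SigmaFinite Q] (hPQ : P ≪ Q)
    (hint : Integrable (llr P Q) P) (hE : MeasurableSet E) :
    Integrable (llr P[|E] Q) P[|E] := by
  apply integrable_cond_of_integrableOn
  exact (hint.restrict.sub (integrable_const _)).congr (llr_cond_ae_eq hPQ hE).symm

lemma measureReal_mul_integral_llr_cond [IsFiniteMeasure P] [SigmaFinite Q] (hPQ : P ≪ Q)
    (hint : Integrable (llr P Q) P) (hE : MeasurableSet E) :
    P.real E * ∫ x, llr P[|E] Q x ∂P[|E]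
      = ∫ x in E, llr P Q x ∂P + Real.negMulLog (P.real E) :=
  calc P.real E * ∫ x, llr P[|E] Q x ∂P[|E]
      = ∫ x in E, llr P[|E] Q x ∂P :=
        measureReal_smul_integral_cond _ (measure_ne_top P E)
    _ = ∫ x in E, (llr P Q x - Real.log (P.real E)) ∂P := integral_congr_ae (llr_cond_ae_eq hPQ hE)
    _ = ∫ x in E, llr P Q x ∂P + Real.negMulLog (P.real E) := by
        rw [integral_sub hint.restrict (integrable_const _), setIntegral_const, smul_eq_mul,
          Real.negMulLog, neg_mul, sub_eq_add_neg]

lemma measureReal_mul_integral_llr_cond_add_compl [IsProbabilityMeasure P] [SigmaFinite Q]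
    (hPQ : P ≪ Q) (hint : Integrable (llr P Q) P) (hE : MeasurableSet E) :
    P.real E * ∫ x, llr P[|E] Q x ∂P[|E] + P.real Eᶜ * ∫ x, llr P[|Eᶜ] Q x ∂P[|Eᶜ]
      = ∫ x, llr P Q x ∂P + Real.binEntropy (P.real E) := by
  rw [measureReal_mul_integral_llr_cond hPQ hint hE,
    measureReal_mul_integral_llr_cond hPQ hint hE.compl, ← integral_add_compl hE hint,
    Real.binEntropy_eq_negMulLog_add_negMulLog_one_sub, probReal_compl_eq_one_sub hE]
  ring

lemma integral_llr_nonneg [IsZeroOrProbabilityMeasure P] [IsProbabilityMeasure Q] (hPQ : P ≪ Q) :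
    0 ≤ ∫ x, llr P Q x ∂P := by
  obtain rfl | _ := eq_zero_or_isProbabilityMeasure P
  · simp
  · rw [← InformationTheory.toReal_klDiv_of_measure_eq hPQ (by simp)]
    exact ENNReal.toReal_nonneg

lemma measureReal_mul_integral_llr_cond_le [IsProbabilityMeasure P] [IsProbabilityMeasure Q]
    (hPQ : P ≪ Q) (hint : Integrable (llr P Q) P) (hE : MeasurableSet E) :
    P.real E * ∫ x, llr P[|E] Q x ∂P[|E] ≤ ∫ x, llr P Q x ∂P + Real.binEntropy (P.real E) := by
  have hcompl : 0 ≤ P.real Eᶜ * ∫ x, llr P[|Eᶜ] Q x ∂P[|Eᶜ] :=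
    mul_nonneg measureReal_nonneg (integral_llr_nonneg (cond_absolutelyContinuous.trans hPQ))
  linarith [measureReal_mul_integral_llr_cond_add_compl hPQ hint hE]

end LogLikelihoodRatio

section KLDiv

variable {Ω : Type*} [MeasurableSpace Ω] {P Q : Measure Ω}

lemma klDiv_of_ac_of_integrable (hPQ : P ≪ Q) (hint : Integrable (llr P Q) P) :
    klDiv P Q = ENNReal.ofReal (∫ x, llr P Q x ∂P) :=
  if_pos ⟨hPQ, hint⟩

lemma klDiv_ne_top_iff : klDiv P Q ≠ ⊤ ↔ P ≪ Q ∧ Integrable (llr P Q) P := by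
  simp [klDiv, llr_def]

end KLDiv

theorem klDiv_cond_le_general {Ω : Type*} [MeasurableSpace Ω] (P Q : Measure Ω)
    [IsProbabilityMeasure P] [IsProbabilityMeasure Q] (E : Set Ω) (hPE : P E ≠ 0) :
    klDiv P[|E] Q ≤ (klDiv P Q + ENNReal.ofReal (Real.binEntropy (P.real E))) / P E := by
  wlog hE : MeasurableSet E
  · have hmeas := this P Q (toMeasurable P E) (by rwa [measure_toMeasurable])
      (measurableSet_toMeasurable P E)
    rwa [cond_toMeasurable_eq, measureReal_def, measure_toMeasurable, ← measureReal_def] at hmeas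
  by_cases hfin : klDiv P Q = ⊤
  · simp [hfin, ENNReal.top_div_of_ne_top (measure_ne_top P E)]
  obtain ⟨hPQ, hint⟩ := klDiv_ne_top_iff.1 hfin
  rw [ENNReal.le_div_iff_mul_le (.inl hPE) (.inl (measure_ne_top P E)), mul_comm]
  calc P E * klDiv P[|E] Q
      = ENNReal.ofReal (P.real E * ∫ x, llr P[|E] Q x ∂P[|E]) := by
        rw [klDiv_of_ac_of_integrable (cond_absolutelyContinuous.trans hPQ)
          (integrable_llr_cond hPQ hint hE), ENNReal.ofReal_mul measureReal_nonneg,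
          ofReal_measureReal]
    _ ≤ ENNReal.ofReal (∫ x, llr P Q x ∂P + Real.binEntropy (P.real E)) :=
        ENNReal.ofReal_le_ofReal (measureReal_mul_integral_llr_cond_le hPQ hint hE)
    _ ≤ klDiv P Q + ENNReal.ofReal (Real.binEntropy (P.real E)) := by
        rw [klDiv_of_ac_of_integrable hPQ hint]
        exact ENNReal.ofReal_add_le

/-- KL divergence under conditioning on an event (Lemma 2.3 of the paper). -/
theorem klDiv_cond_le {Ω : Type*} [MeasurableSpace Ω] (P Q : Measure Ω)
    [IsProbabilityMeasure P] [IsProbabilityMeasure Q]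
    (hPQ : P ≪ Q) (E : Set Ω) (hE : MeasurableSet E) (hPE : 0 < P E) :
    klDiv (P[|E]) Q ≤ (klDiv P Q + 2) / P E := by
  have hentropy : Real.binEntropy (P.real E) ≤ 2 :=
    Real.binEntropy_le_log_two.trans (by linarith [Real.log_two_lt_d9])
  exact (klDiv_cond_le_general P Q E hPE.ne').trans (by gcongr; simpa using hentropy)

end
end
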